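/- arXiv:1910.14439 — 2 statements merged into one kernel-verified Lean document; each statement's English description precedes it below -/
import Mathlib

section
/- Expected hitting time of the ground states: for the periodic SPM at L=L_c=⌊e^{β/2}⌋ and β sufficiently large, let h:Ω→ℝ be the unique function with h≡0 on the set 𝒢 of ground states and (𝓛h)(σ)=−1 for every σ∉𝒢 (so h(σ)=𝔼_σ[τ_𝒢], the expected hitting time of 𝒢 from σ). Then max_{σ∈Ω} h(σ) ≤ C·β⁹·e^{3.75β} for some constant C. -/
open scoped BigOperators

attribute [local instance] Classical.propDecidable

noncomputable section

namespace SPMP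

/-- Spin configurations on the `L × L` torus; `true` codes spin `+1`. -/
abbrev ConfigP (L : ℕ) := Fin L × Fin L → Bool

/-- The real spin value of a Boolean spin. -/
def sval (b : Bool) : ℝ := if b then 1 else -1

/-- Cyclic successor on `Fin L`. -/
def fsucc {L : ℕ} (i : Fin L) : Fin L := ⟨(i.val + 1) % L, Nat.mod_lt _ i.pos⟩

/-- The periodic plaquette variable
`p_x(σ) = σ_{(x₁,x₂)} σ_{(x₁+1,x₂)} σ_{(x₁,x₂+1)} σ_{(x₁+1,x₂+1)}` (coordinates mod `L`). -/
def plaqP (L : ℕ) (σ : ConfigP L) (x : Fin L × Fin L) : ℝ :=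
  sval (σ x) * sval (σ (fsucc x.1, x.2)) * sval (σ (x.1, fsucc x.2)) *
    sval (σ (fsucc x.1, fsucc x.2))

/-- The periodic Hamiltonian `H(σ) = -(1/2) ∑_x p_x(σ)`. -/
def hamP (L : ℕ) (σ : ConfigP L) : ℝ := -(1 / 2) * ∑ x : Fin L × Fin L, plaqP L σ x

/-- The Gibbs measure `π(σ) = e^{-βH(σ)}/Z`. -/
def gibbsP (L : ℕ) (β : ℝ) (σ : ConfigP L) : ℝ :=
  Real.exp (-β * hamP L σ) / ∑ η : ConfigP L, Real.exp (-β * hamP L η)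

/-- Flip one spin. -/
def flipP (L : ℕ) (σ : ConfigP L) (x : Fin L × Fin L) : ConfigP L :=
  fun i => if i = x then !(σ i) else σ i

/-- Metropolis rate of the move `σ → η`: `min(1, e^{-β(H(η)-H(σ))})`. -/
def metroRateP (L : ℕ) (β : ℝ) (σ η : ConfigP L) : ℝ :=
  min 1 (Real.exp (-β * (hamP L η - hamP L σ)))

/-- The Glauber generator of the periodic dynamics, as a matrix. -/
def genP (L : ℕ) (β : ℝ) : Matrix (ConfigP L) (ConfigP L) ℝ :=
  fun σ η =>
    if η = σ then -(∑ x : Fin L × Fin L, metroRateP L β σ (flipP L σ x))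
    else ∑ x : Fin L × Fin L, if η = flipP L σ x then metroRateP L β σ (flipP L σ x) else 0

/-- Entrywise matrix exponential `∑ₖ Aᵏ/k!`. -/
def mexp {n : Type*} [Fintype n] [DecidableEq n] (A : Matrix n n ℝ) : Matrix n n ℝ :=
  fun i j => ∑' k : ℕ, (A ^ k) i j / (Nat.factorial k : ℝ)

/-- Total-variation distance between two (probability) vectors. -/
def tv {n : Type*} [Fintype n] (μ ν : n → ℝ) : ℝ := (∑ s, |μ s - ν s|) / 2

/-- The `ε`-mixing time of the periodic Glauber dynamics. -/
def tmixP (L : ℕ) (β ε : ℝ) : ℝ :=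
  sInf {t : ℝ | 0 < t ∧ ∀ σ : ConfigP L, tv (mexp (t • genP L β) σ) (gibbsP L β) < ε}

/-- The set of ground states: minimizers of the Hamiltonian. -/
def GroundP (L : ℕ) : Set (ConfigP L) := {σ | ∀ η : ConfigP L, hamP L σ ≤ hamP L η}

/-- The critical length scale `L_c = ⌊e^{β/2}⌋`. -/
def Lc (β : ℝ) : ℕ := ⌊Real.exp (β / 2)⌋₊

end SPMP

open SPMP

/-! Work with the defects, the plaquettes with `p_x = -1`: flipping a spin toggles four of them, and
along an excited cyclic row or column a defect has a next one. Toggling the rectangle spanned by a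
defect `d`, the next defect of its row and the next defect of its column removes at least two
defects. Sweeping this rectangle row by row realises the move by single flips through an energy
barrier `2`, and each step of a sweep is crossed by few paths. Comparing Dirichlet forms along these
sweeps bounds the variance weighted by the number of defects by `O(β L^{7/2} e^{2β})` times the
Dirichlet form. Hence the integral of a small multiple of the number of defects, up to the hitting
time of the ground states, has an exponential moment `1 + g`; by concavity of the logarithm
`log (1 + log (1 + g))` is, up to a constant factor, a Lyapunov function, and the maximum principle
compares it with the expected hitting time. -/

lemma log_one_add_log_sub_le {a b : ℝ} (ha : 1 ≤ a) (hb : 1 ≤ b) :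
    Real.log (1 + Real.log b) - Real.log (1 + Real.log a)
      ≤ 1 / (a * (1 + Real.log a)) * (b - a) := by
  have ha0 : 0 < a := by linarith
  have hla : 0 < 1 + Real.log a := by linarith [Real.log_nonneg ha]
  have hlb : 0 < 1 + Real.log b := by linarith [Real.log_nonneg hb]
  have hlog : ∀ {x y : ℝ}, 0 < x → 0 < y → Real.log y - Real.log x ≤ (y - x) / x := by
    intro x y hx hy
    rw [← Real.log_div hy.ne' hx.ne', sub_div, div_self hx.ne']
    exact Real.log_le_sub_one_of_pos (div_pos hy hx)
  calc _ ≤ (1 + Real.log b - (1 + Real.log a)) / (1 + Real.log a) := hlog hla hlb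
    _ ≤ ((b - a) / a) / (1 + Real.log a) :=
        div_le_div_of_nonneg_right (by linarith [hlog ha0 (by linarith : 0 < b)]) hla.le
    _ = _ := by field_simp

/-! ### Reversible chains -/

/-- A reversible continuous-time Markov chain on `S` whose jumps are given by involutions: from `s`
it jumps to `move x s` at rate `cond x s / weight s`, with `weight` the (unnormalised) reversible
measure and `cond` the conductance. -/
structure ReversibleChain (S X : Type*) where
  move : X → S → S
  move_move : ∀ x s, move x (move x s) = s
  weight : S → ℝ
  weight_pos : ∀ s, 0 < weight s
  cond : X → S → ℝ
  cond_nonneg : ∀ x s, 0 ≤ cond x s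
  cond_move : ∀ x s, cond x (move x s) = cond x s

namespace ReversibleChain

variable {S X : Type*}

/-- The Metropolis chain with given moves and reversible weight. -/
def metropolis (move : X → S → S) (move_move : ∀ x s, move x (move x s) = s) (weight : S → ℝ)
    (weight_pos : ∀ s, 0 < weight s) : ReversibleChain S X where
  move := move
  move_move := move_move
  weight := weight
  weight_pos := weight_pos
  cond x s := min (weight s) (weight (move x s))
  cond_nonneg x s := le_min (weight_pos s).le (weight_pos _).le
  cond_move x s := by rw [move_move, min_comm]

lemma metropolis_rate (move : X → S → S) (move_move : ∀ x s, move x (move x s) = s)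
    (weight : S → ℝ) (weight_pos : ∀ s, 0 < weight s) (x : X) (s : S) :
    (metropolis move move_move weight weight_pos).cond x s / weight s
      = min 1 (weight (move x s) / weight s) := by
  rw [metropolis, ← min_div_div_right (weight_pos s).le, div_self (weight_pos s).ne']

lemma rate_nonneg (Q : ReversibleChain S X) (x : X) (s : S) : 0 ≤ Q.cond x s / Q.weight s :=
  div_nonneg (Q.cond_nonneg x s) (Q.weight_pos s).le

/-- The generator of the chain. -/
def gen [Fintype X] (Q : ReversibleChain S X) : (S → ℝ) →ₗ[ℝ] (S → ℝ) :=
  LinearMap.pi fun s => ∑ x, (Q.cond x s / Q.weight s) •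
    ((LinearMap.proj (Q.move x s) : (S → ℝ) →ₗ[ℝ] ℝ) - LinearMap.proj s)

/-- The Dirichlet form of the chain with respect to its weight. -/
def dirichlet [Fintype S] [Fintype X] (Q : ReversibleChain S X) (f g : S → ℝ) : ℝ :=
  (∑ s, ∑ x, Q.cond x s * (f (Q.move x s) - f s) * (g (Q.move x s) - g s)) / 2

section Generator

variable [Fintype X] (Q : ReversibleChain S X)

lemma gen_apply (f : S → ℝ) (s : S) :
    Q.gen f s = ∑ x, Q.cond x s / Q.weight s * (f (Q.move x s) - f s) := by
  simp [gen]

lemma gen_comp_le {φ : ℝ → ℝ} {f : S → ℝ} {s : S} {a : ℝ}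
    (hφ : ∀ t, φ (f t) - φ (f s) ≤ a * (f t - f s)) :
    Q.gen (fun t => φ (f t)) s ≤ a * Q.gen f s := by
  rw [gen_apply, gen_apply, Finset.mul_sum]
  refine Finset.sum_le_sum fun x _ => ?_
  rw [mul_left_comm]
  exact mul_le_mul_of_nonneg_left (hφ _) (Q.rate_nonneg x s)

lemma gen_comp_of_semiconj {S' X' : Type*} [Fintype X'] {Q' : ReversibleChain S' X'} {φ : S → S'}
    (e : X ≃ X') (hmove : ∀ x s, φ (Q.move x s) = Q'.move (e x) (φ s))
    (hrate : ∀ x s, Q.cond x s / Q.weight s = Q'.cond (e x) (φ s) / Q'.weight (φ s))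
    (f : S' → ℝ) (s : S) : Q.gen (fun t => f (φ t)) s = Q'.gen f (φ s) := by
  rw [gen_apply, gen_apply]
  exact Fintype.sum_equiv e _ _ fun x => by rw [hmove, hrate]

lemma nonpos_of_gen_pos [Finite S] {B : Set S} {f : S → ℝ} (hoff : ∀ s ∉ B, f s ≤ 0)
    (hgen : ∀ s ∈ B, 0 < Q.gen f s) (s : S) : f s ≤ 0 := by
  have : Nonempty S := ⟨s⟩
  obtain ⟨t, ht⟩ := Finite.exists_max f
  refine (ht s).trans (hoff t fun htB => (hgen t htB).not_ge ?_)
  rw [gen_apply]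
  exact Finset.sum_nonpos fun x _ =>
    mul_nonpos_of_nonneg_of_nonpos (Q.rate_nonneg x t) (sub_nonpos.2 (ht _))

end Generator

variable [Fintype S] [Fintype X] (Q : ReversibleChain S X)

lemma dirichlet_nonneg (f : S → ℝ) : 0 ≤ Q.dirichlet f f := by
  refine div_nonneg (Finset.sum_nonneg fun s _ => Finset.sum_nonneg fun x _ => ?_) two_pos.le
  rw [mul_assoc]
  exact mul_nonneg (Q.cond_nonneg x s) (mul_self_nonneg _)

omit [Fintype X] in
lemma sum_comp_move (x : X) (F : S → ℝ) : ∑ s, F (Q.move x s) = ∑ s, F s :=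
  Equiv.sum_comp (Function.Involutive.toPerm (Q.move x) (Q.move_move x)) F

lemma sum_weight_mul_gen (f g : S → ℝ) :
    ∑ s, Q.weight s * g s * Q.gen f s = -Q.dirichlet f g := by
  have hgen : ∑ s, Q.weight s * g s * Q.gen f s
      = ∑ x, ∑ s, Q.cond x s * (f (Q.move x s) - f s) * g s := by
    rw [Finset.sum_comm]
    refine Finset.sum_congr rfl fun s _ => ?_
    rw [gen_apply, Finset.mul_sum]
    refine Finset.sum_congr rfl fun x _ => ?_
    have := (Q.weight_pos s).ne'
    field_simp
  have hswap : ∀ x, ∑ s, Q.cond x s * (f (Q.move x s) - f s) * g s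
      = ∑ s, Q.cond x s * (f s - f (Q.move x s)) * g (Q.move x s) := fun x => by
    rw [← Q.sum_comp_move x]
    simp only [Q.cond_move, Q.move_move]
  have hsum : -(2 * Q.dirichlet f g) = 2 * ∑ s, Q.weight s * g s * Q.gen f s := by
    rw [two_mul (∑ s, _), hgen, dirichlet, mul_div_cancel₀ _ two_ne_zero, Finset.sum_comm,
      ← Finset.sum_neg_distrib, ← Finset.sum_add_distrib]
    refine Finset.sum_congr rfl fun x _ => ?_
    nth_rewrite 1 [hswap x]
    rw [← Finset.sum_add_distrib, ← Finset.sum_neg_distrib]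
    exact Finset.sum_congr rfl fun s _ => by ring
  linarith

/-! ### Exponential moments of exit times -/

/-- The weighted Poincaré inequality with constant `κ` for the potential `u` on the domain `B`. -/
def WeightedPoincare (B : Set S) (u : S → ℝ) (κ : ℝ) : Prop :=
  ∀ f : S → ℝ, (∀ s ∉ B, f s = 0) → ∑ s, Q.weight s * u s * f s ^ 2 ≤ κ * Q.dirichlet f f

/-- The function `g` solves the Feynman–Kac equation of `g s = 𝔼_s[exp (∫₀^τ u)] - 1`, where `τ` is
the exit time of `B`. -/
structure IsExpMoment (B : Set S) (u g : S → ℝ) : Prop where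
  eq_zero : ∀ s ∉ B, g s = 0
  gen_eq : ∀ s ∈ B, Q.gen g s = -(u s * (1 + g s))

variable {Q} {B : Set S} {u g : S → ℝ} {κ : ℝ}

lemma WeightedPoincare.eq_zero (hP : Q.WeightedPoincare B u κ) (hκ : κ < 1)
    (hu : ∀ s ∈ B, 0 < u s) {f : S → ℝ} (hf : ∀ s ∉ B, f s = 0)
    (hE : Q.dirichlet f f ≤ ∑ s, Q.weight s * u s * f s ^ 2) : f = 0 := by
  have hnonneg : ∀ s ∈ Finset.univ, 0 ≤ Q.weight s * u s * f s ^ 2 := fun s _ => by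
    by_cases hs : s ∈ B
    · exact mul_nonneg (mul_pos (Q.weight_pos s) (hu s hs)).le (sq_nonneg _)
    · simp [hf s hs]
  have hE0 : Q.dirichlet f f = 0 :=
    le_antisymm (by nlinarith [hP f hf]) (Q.dirichlet_nonneg f)
  have hsum : ∑ s, Q.weight s * u s * f s ^ 2 = 0 :=
    le_antisymm ((hP f hf).trans (by rw [hE0, mul_zero])) (Finset.sum_nonneg hnonneg)
  funext s
  by_cases hs : s ∈ B
  · have hterm := (Finset.sum_eq_zero_iff_of_nonneg hnonneg).1 hsum s (Finset.mem_univ s)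
    exact pow_eq_zero_iff two_ne_zero |>.1
      ((mul_eq_zero.1 hterm).resolve_left (mul_pos (Q.weight_pos s) (hu s hs)).ne')
  · exact hf s hs

lemma WeightedPoincare.exists_isExpMoment (hP : Q.WeightedPoincare B u κ) (hκ : κ < 1)
    (hu : ∀ s ∈ B, 0 < u s) : ∃ g, Q.IsExpMoment B u g := by
  let A : (S → ℝ) →ₗ[ℝ] (S → ℝ) := LinearMap.pi fun s =>
    if s ∈ B then LinearMap.proj s ∘ₗ Q.gen + u s • LinearMap.proj s else LinearMap.proj s
  have hA_mem : ∀ f, ∀ s ∈ B, A f s = Q.gen f s + u s * f s := fun f s hs => by simp [A, hs]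
  have hA_notMem : ∀ f, ∀ s ∉ B, A f s = f s := fun f s hs => by simp [A, hs]
  have hinj : Function.Injective A := by
    rw [← LinearMap.ker_eq_bot, LinearMap.ker_eq_bot']
    intro f hf
    have hoff : ∀ s ∉ B, f s = 0 := fun s hs => by rw [← hA_notMem f s hs, hf, Pi.zero_apply]
    refine hP.eq_zero hκ hu hoff (le_of_eq ?_)
    rw [← neg_inj, ← Q.sum_weight_mul_gen, ← Finset.sum_neg_distrib]
    refine Finset.sum_congr rfl fun s _ => ?_
    by_cases hs : s ∈ B
    · have hgen : Q.gen f s + u s * f s = 0 := by rw [← hA_mem f s hs, hf, Pi.zero_apply]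
      linear_combination Q.weight s * f s * hgen
    · simp [hoff s hs]
  obtain ⟨g, hg⟩ := LinearMap.injective_iff_surjective.1 hinj (B.indicator (-u))
  refine ⟨g, fun s hs => ?_, fun s hs => ?_⟩
  · rw [← hA_notMem g s hs, hg, Set.indicator_of_notMem hs]
  · have hgs : Q.gen g s + u s * g s = -u s := by
      rw [← hA_mem g s hs, hg, Set.indicator_of_mem hs, Pi.neg_apply]
    linear_combination hgs

lemma dirichlet_max_neg_le (Q : ReversibleChain S X) (g : S → ℝ) :
    Q.dirichlet (fun s => max (-g s) 0) (fun s => max (-g s) 0)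
      ≤ -Q.dirichlet g fun s => max (-g s) 0 := by
  have key : ∀ a b : ℝ, (max (-b) 0 - max (-a) 0) * (max (-b) 0 - max (-a) 0)
      ≤ -((b - a) * (max (-b) 0 - max (-a) 0)) := fun a b => by
    rcases le_total (-a) 0 with ha | ha <;> rcases le_total (-b) 0 with hb | hb <;>
      simp only [max_eq_left, max_eq_right, ha, hb] <;> nlinarith
  rw [dirichlet, dirichlet, ← neg_div, ← Finset.sum_neg_distrib]
  refine div_le_div_of_nonneg_right (Finset.sum_le_sum fun s _ => ?_) two_pos.le
  rw [← Finset.sum_neg_distrib]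
  refine Finset.sum_le_sum fun x _ => ?_
  rw [mul_assoc, mul_assoc, ← mul_neg]
  exact mul_le_mul_of_nonneg_left (key _ _) (Q.cond_nonneg x s)

lemma WeightedPoincare.isExpMoment_nonneg (hP : Q.WeightedPoincare B u κ) (hκ : κ < 1)
    (hu : ∀ s ∈ B, 0 < u s) (hg : Q.IsExpMoment B u g) (s : S) : 0 ≤ g s := by
  have hterm : ∀ s, Q.weight s * max (-g s) 0 * Q.gen g s
      ≤ Q.weight s * u s * max (-g s) 0 ^ 2 := fun s => by
    by_cases hs : s ∈ B
    · have hwu := mul_pos (Q.weight_pos s) (hu s hs)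
      rw [hg.gen_eq s hs]
      rcases le_total (-g s) 0 with h | h
      · simp [max_eq_right h]
      · rw [max_eq_left h]
        nlinarith [mul_nonneg hwu.le h]
    · simp [hg.eq_zero s hs]
  have hneg : (fun s => max (-g s) 0) = 0 :=
    hP.eq_zero hκ hu (fun s hs => by simp [hg.eq_zero s hs]) <|
      calc _ ≤ -Q.dirichlet g fun s => max (-g s) 0 := Q.dirichlet_max_neg_le g
        _ = ∑ s, Q.weight s * max (-g s) 0 * Q.gen g s := (Q.sum_weight_mul_gen _ _).symm
        _ ≤ _ := Finset.sum_le_sum fun s _ => hterm s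
  have := congrFun hneg s
  simpa using this

lemma WeightedPoincare.sum_isExpMoment_sq_le (hP : Q.WeightedPoincare B u (1 / 2))
    (hu : ∀ s, 0 ≤ u s) (hg : Q.IsExpMoment B u g) :
    ∑ s, Q.weight s * u s * g s ^ 2 ≤ ∑ s, Q.weight s * u s := by
  have hdirichlet : Q.dirichlet g g
      = ∑ s, Q.weight s * u s * g s + ∑ s, Q.weight s * u s * g s ^ 2 := by
    rw [← neg_inj, ← Q.sum_weight_mul_gen, ← Finset.sum_add_distrib, ← Finset.sum_neg_distrib]
    refine Finset.sum_congr rfl fun s _ => ?_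
    by_cases hs : s ∈ B
    · rw [hg.gen_eq s hs]; ring
    · simp [hg.eq_zero s hs]
  have hamgm : 2 * ∑ s, Q.weight s * u s * g s
      ≤ ∑ s, Q.weight s * u s * g s ^ 2 + ∑ s, Q.weight s * u s := by
    rw [Finset.mul_sum, ← Finset.sum_add_distrib]
    refine Finset.sum_le_sum fun s _ => ?_
    nlinarith [mul_nonneg (mul_nonneg (Q.weight_pos s).le (hu s)) (sq_nonneg (g s - 1))]
  linarith [hP g hg.eq_zero]

omit [Fintype S] in
lemma IsExpMoment.gen_log_log_le (hg : Q.IsExpMoment B u g) (hg0 : ∀ s, 0 ≤ g s) {s : S}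
    (hs : s ∈ B) :
    Q.gen (fun t => Real.log (1 + Real.log (1 + g t))) s ≤ -(u s / (1 + Real.log (1 + g s))) := by
  have hone : ∀ t, 1 ≤ 1 + g t := fun t => by linarith [hg0 t]
  have hpos : 0 < 1 + g s := by linarith [hg0 s]
  calc _ ≤ 1 / ((1 + g s) * (1 + Real.log (1 + g s))) * Q.gen g s :=
        Q.gen_comp_le (φ := fun y => Real.log (1 + Real.log (1 + y))) fun t => by
          simpa only [add_sub_add_left_eq_sub] using log_one_add_log_sub_le (hone s) (hone t)
    _ = _ := by
        rw [hg.gen_eq s hs]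
        have := hpos.ne'
        field_simp

end ReversibleChain

/-! ### Defect fields on the discrete torus -/

namespace Plaquette

/-- The real indicator of `a = 1`. -/
def ind (a : ZMod 2) : ℝ := if a = 1 then 1 else 0

lemma eq_one_or_eq_zero (a : ZMod 2) : a = 1 ∨ a = 0 := by
  revert a; decide

lemma ind_one : ind 1 = 1 := if_pos rfl

lemma ind_zero : ind 0 = 0 := if_neg (by decide)

lemma ind_nonneg (a : ZMod 2) : 0 ≤ ind a := by unfold ind; split_ifs <;> norm_num

lemma ind_add_one (a : ZMod 2) : ind (a + 1) = 1 - ind a := by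
  rcases eq_one_or_eq_zero a with rfl | rfl
  · rw [CharTwo.add_self_eq_zero, ind_zero, ind_one, sub_self]
  · rw [zero_add, ind_zero, ind_one, sub_zero]

lemma ind_add_le (a b : ZMod 2) : ind (a + b) ≤ ind a + ind b := by
  rcases eq_one_or_eq_zero b with rfl | rfl
  · rw [ind_add_one, ind_one]; linarith [ind_nonneg a]
  · rw [add_zero, ind_zero, add_zero]

section Count

variable {ι : Type*} [Fintype ι] {a : ι → ZMod 2} {i : ι}

/-- The set where a field with values in `ℤ/2` equals `1`. -/
def ones (a : ι → ZMod 2) : Finset ι := {i | a i = 1}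

/-- The number of ones of a field with values in `ℤ/2`, as a real number. -/
def count (a : ι → ZMod 2) : ℝ := ∑ i, ind (a i)

lemma mem_ones : i ∈ ones a ↔ a i = 1 := Finset.mem_filter_univ i

lemma sum_ind_mul (a : ι → ZMod 2) (f : ι → ℝ) : ∑ i, ind (a i) * f i = ∑ i ∈ ones a, f i := by
  rw [ones, Finset.sum_filter]
  exact Finset.sum_congr rfl fun i _ => by rw [ind, ite_mul, one_mul, zero_mul]

lemma count_eq_card (a : ι → ZMod 2) : count a = (ones a).card := by
  simpa [count] using sum_ind_mul a fun _ => 1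

lemma count_nonneg (a : ι → ZMod 2) : 0 ≤ count a := Finset.sum_nonneg fun _ _ => ind_nonneg _

lemma count_le_card (a : ι → ZMod 2) : count a ≤ Fintype.card ι := by
  rw [count_eq_card]; exact_mod_cast Finset.card_le_univ _

lemma count_zero : count (0 : ι → ZMod 2) = 0 := by simp [count, ind_zero]

lemma one_le_count (ha : a ≠ 0) : 1 ≤ count a := by
  obtain ⟨i, hi⟩ := Function.ne_iff.1 ha
  rw [count_eq_card, Nat.one_le_cast]
  exact Finset.card_pos.2 ⟨i, mem_ones.2 ((eq_one_or_eq_zero _).resolve_right hi)⟩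

lemma count_add_le (a b : ι → ZMod 2) : count (a + b) ≤ count a + count b := by
  rw [count, count, count, ← Finset.sum_add_distrib]
  exact Finset.sum_le_sum fun i _ => ind_add_le _ _

lemma exists_ne_of_sum_eq_zero (ha : ∑ j, a j = 0) (hi : a i = 1) : ∃ j, j ≠ i ∧ a j = 1 := by
  by_contra! hne
  have hsum : ∑ j, a j = a i := Finset.sum_eq_single i
    (fun j _ hj => (eq_one_or_eq_zero _).resolve_left (hne j hj))
    (fun h => absurd (Finset.mem_univ i) h)
  exact one_ne_zero (hi.symm.trans (hsum.symm.trans ha))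

variable [DecidableEq ι]

lemma count_single (i : ι) : count (Pi.single i 1 : ι → ZMod 2) = 1 := by
  rw [count, Finset.sum_eq_single i (fun j _ hj => by rw [Pi.single_eq_of_ne hj, ind_zero])
    (fun h => absurd (Finset.mem_univ i) h), Pi.single_eq_same, ind_one]

lemma count_add_single (a : ι → ZMod 2) (i : ι) :
    count (a + Pi.single i 1) = count a + (1 - 2 * ind (a i)) := by
  have hsplit : ∀ b : ι → ZMod 2, count b = ind (b i) + ∑ j ∈ Finset.univ.erase i, ind (b j) :=
    fun b => (Finset.add_sum_erase _ _ (Finset.mem_univ i)).symm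
  have hrest : ∑ j ∈ Finset.univ.erase i, ind ((a + Pi.single i 1 : ι → ZMod 2) j)
      = ∑ j ∈ Finset.univ.erase i, ind (a j) :=
    Finset.sum_congr rfl fun j hj => by
      rw [Pi.add_apply, Pi.single_eq_of_ne (Finset.ne_of_mem_erase hj), add_zero]
  rw [hsplit, hsplit a, hrest, Pi.add_apply, Pi.single_eq_same, ind_add_one]
  ring

lemma count_add_single' (a : ι → ZMod 2) (i : ι) :
    count (a + Pi.single i 1) = count a + (2 * ind ((a + Pi.single i 1 : ι → ZMod 2) i) - 1) := by
  rw [count_add_single, Pi.add_apply, Pi.single_eq_same, ind_add_one]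
  ring

lemma count_add_single_of_eq_one (hi : a i = 1) : count (a + Pi.single i 1) = count a - 1 := by
  rw [count_add_single, hi, ind_one]
  ring

lemma count_add_single_le (a : ι → ZMod 2) (i : ι) :
    count (a + Pi.single i 1) ≤ count a + 1 :=
  (count_add_le _ _).trans_eq (by rw [count_single])

end Count

variable {L : ℕ}

/-- A set of defective plaquettes on the torus, as a field with values in `ℤ/2`. -/
abbrev Defects (L : ℕ) := ZMod L × ZMod L → ZMod 2

/-- The field with a single defect. -/
abbrev pt (p : ZMod L × ZMod L) : Defects L := Pi.single p 1

/-- Every row and every column holds an even number of defects, as is the case for the defects of a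
spin configuration. -/
def IsEven [NeZero L] (D : Defects L) : Prop :=
  (∀ r, ∑ c, D (r, c) = 0) ∧ ∀ c, ∑ r, D (r, c) = 0

/-- The number of defects of a row. -/
def rowCount [NeZero L] (D : Defects L) (r : ZMod L) : ℝ := count fun c => D (r, c)

/-- The Boltzmann weight of a defect field. -/
def wt [NeZero L] (β : ℝ) (D : Defects L) : ℝ := Real.exp (-β * count D)

/-- The indicator of the four corners of the rectangle spanned by `d` and `e`, counted modulo `2`
when the rectangle degenerates. -/
def rect (d e : ZMod L × ZMod L) : Defects L := pt d + pt (d.1, e.2) + pt (e.1, d.2) + pt e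

/-- The effect of a spin flip: four neighbouring plaquettes change. -/
def toggle (x : ZMod L × ZMod L) (D : Defects L) : Defects L := D + rect x (x.1 + 1, x.2 + 1)

/-- The field toggled by the flips of the spins in `[d₁, x₁) × [d₂, c)` and `{x₁} × [d₂, x₂)`. -/
def sweep (d : ZMod L × ZMod L) (c : ZMod L) (x : ZMod L × ZMod L) : Defects L :=
  rect d (x.1, c) + rect (x.1, d.2) (x.1 + 1, x.2)

lemma pt_apply_of_ne {p q : ZMod L × ZMod L} (h : q ≠ p) : pt p q = 0 := Pi.single_eq_of_ne h 1

lemma two_eq_zero : (2 : Defects L) = 0 := CharTwo.two_eq_zero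

lemma toggle_toggle (x : ZMod L × ZMod L) (D : Defects L) : toggle x (toggle x D) = D := by
  unfold toggle
  linear_combination rect x (x.1 + 1, x.2 + 1) * two_eq_zero (L := L)

lemma rect_eq_zero_of_fst (d : ZMod L × ZMod L) (c : ZMod L) : rect d (d.1, c) = 0 := by
  unfold rect
  linear_combination (pt d + pt (d.1, c)) * two_eq_zero (L := L)

lemma rect_eq_zero_of_snd (d : ZMod L × ZMod L) (r : ZMod L) : rect d (r, d.2) = 0 := by
  unfold rect
  linear_combination (pt d + pt (r, d.2)) * two_eq_zero (L := L)

lemma rect_add_rect_fst (d : ZMod L × ZMod L) (r r' c : ZMod L) :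
    rect d (r, c) + rect (r, d.2) (r', c) = rect d (r', c) := by
  unfold rect
  linear_combination (pt (r, d.2) + pt (r, c)) * two_eq_zero (L := L)

lemma rect_add_rect_snd (d : ZMod L × ZMod L) (r c c' : ZMod L) :
    rect d (r, c) + rect (d.1, c) (r, c') = rect d (r, c') := by
  unfold rect
  linear_combination (pt (d.1, c) + pt (r, c)) * two_eq_zero (L := L)

lemma sweep_self (d : ZMod L × ZMod L) (c : ZMod L) : sweep d c d = 0 := by
  rw [sweep, rect_eq_zero_of_fst, rect_eq_zero_of_snd, add_zero]

lemma sweep_row_start (d : ZMod L × ZMod L) (c r : ZMod L) :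
    sweep d c (r, d.2) = rect d (r, c) := by
  rw [sweep, rect_eq_zero_of_snd (r, d.2), add_zero]

lemma sweep_row_end (d : ZMod L × ZMod L) (c r : ZMod L) :
    sweep d c (r, c) = sweep d c (r + 1, d.2) := by
  rw [sweep_row_start, sweep, rect_add_rect_fst]

lemma sweep_succ (d : ZMod L × ZMod L) (c r k : ZMod L) (D : Defects L) :
    D + sweep d c (r, k + 1) = toggle (r, k) (D + sweep d c (r, k)) := by
  rw [toggle, sweep, sweep, add_assoc, add_assoc, rect_add_rect_snd]

/-- The six corners of the swept region. -/
lemma sweep_eq (d : ZMod L × ZMod L) (c : ZMod L) (x : ZMod L × ZMod L) :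
    sweep d c x
      = pt d + pt (d.1, c) + pt x + pt (x.1 + 1, x.2) + pt (x.1, c) + pt (x.1 + 1, d.2) := by
  unfold sweep rect
  linear_combination pt (x.1, d.2) * two_eq_zero (L := L)

variable [NeZero L]

lemma one_le_size : (1 : ℝ) ≤ L := by exact_mod_cast NeZero.pos L

lemma sum_rowCount (D : Defects L) : ∑ r, rowCount D r = count D :=
  (Fintype.sum_prod_type fun p => ind (D p)).symm

lemma rowCount_nonneg (D : Defects L) (r : ZMod L) : 0 ≤ rowCount D r := count_nonneg _

lemma rowCount_le (D : Defects L) (r : ZMod L) : rowCount D r ≤ L := by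
  simpa [rowCount] using count_le_card fun c => D (r, c)

lemma count_le_size_sq (D : Defects L) : count D ≤ (L : ℝ) ^ 2 := by
  simpa [sq] using count_le_card D

lemma rowCount_add_le (D E : Defects L) (r : ZMod L) :
    rowCount (D + E) r ≤ rowCount D r + rowCount E r := count_add_le _ _

lemma rowCount_pt_le (p : ZMod L × ZMod L) (r : ZMod L) : rowCount (pt p) r ≤ 1 := by
  calc rowCount (pt p) r ≤ ∑ r, rowCount (pt p) r :=
        Finset.single_le_sum (fun r _ => rowCount_nonneg _ r) (Finset.mem_univ r)
    _ = 1 := by rw [sum_rowCount, count_single]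

lemma rowCount_add_pt_le {D : Defects L} {r : ZMod L} {n : ℝ} (h : rowCount D r ≤ n)
    (p : ZMod L × ZMod L) : rowCount (D + pt p) r ≤ n + 1 :=
  (rowCount_add_le _ _ _).trans (add_le_add h (rowCount_pt_le p r))

lemma rowCount_add_sweep_le (D : Defects L) (d : ZMod L × ZMod L) (c : ZMod L)
    (x : ZMod L × ZMod L) (r : ZMod L) : rowCount (D + sweep d c x) r ≤ rowCount D r + 6 := by
  have hsweep : rowCount (sweep d c x) r ≤ 1 + 1 + 1 + 1 + 1 + 1 := by
    rw [sweep_eq]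
    iterate 5 refine rowCount_add_pt_le ?_ _
    exact rowCount_pt_le d r
  linarith [rowCount_add_le D (sweep d c x) r]

lemma wt_pos (β : ℝ) (D : Defects L) : 0 < wt β D := Real.exp_pos _

lemma exp_mul_two_mul_ind_sub_one_le (β : ℝ) (a : ZMod 2) :
    Real.exp (β * (2 * ind a - 1)) ≤ Real.exp β * (ind a + Real.exp (-2 * β)) := by
  rw [mul_add, ← Real.exp_add]
  rcases eq_one_or_eq_zero a with rfl | rfl
  · rw [ind_one, mul_one, mul_one, show β * (2 - 1) = β by ring]
    exact le_add_of_nonneg_right (Real.exp_pos _).le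
  · rw [ind_zero, mul_zero, mul_zero, zero_add, show β * (0 - 1) = β + -2 * β by ring]

lemma count_add_pt_add_pt {D : Defects L} {p q : ZMod L × ZMod L} (hpq : q ≠ p) (hp : D p = 1)
    (hq : D q = 1) : count (D + pt p + pt q) = count D - 2 := by
  rw [count_add_single_of_eq_one (by rw [Pi.add_apply, pt_apply_of_ne hpq, hq, add_zero]),
    count_add_single_of_eq_one hp]
  ring

lemma count_add_sweep_le {D : Defects L} {d : ZMod L × ZMod L} {c : ZMod L} (hc : c ≠ d.2)
    (hd : D d = 1) (hdc : D (d.1, c) = 1) (x : ZMod L × ZMod L) :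
    count (D + sweep d c x) ≤ count D + (2 * ind ((D + sweep d c x) (x.1, c)) - 1)
      + (2 * ind ((D + sweep d c x) (x.1 + 1, d.2)) - 1) := by
  set S := D + sweep d c x with hS
  set E := D + pt d + pt (d.1, c) + pt x + pt (x.1 + 1, x.2) with hE
  have hSE : S = E + pt (x.1, c) + pt (x.1 + 1, d.2) := by rw [hS, hE, sweep_eq]; abel
  have hcountE : count E ≤ count D := by
    have hcorners := count_add_pt_add_pt (ne_of_apply_ne Prod.snd hc) hd hdc
    linarith [count_add_single_le (D + pt d + pt (d.1, c)) x,
      count_add_single_le (D + pt d + pt (d.1, c) + pt x) (x.1 + 1, x.2)]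
  have hfst := count_add_single' E (x.1, c)
  have hsnd := count_add_single' (E + pt (x.1, c)) (x.1 + 1, d.2)
  have hval : (E + pt (x.1, c)) (x.1, c) = S (x.1, c) := by
    rw [hSE, Pi.add_apply (E + _), pt_apply_of_ne (ne_of_apply_ne Prod.snd hc), add_zero]
  rw [hval] at hfst
  rw [← hSE] at hsnd
  linarith

/-- The energy barrier of a sweep is `2`, and it is lower unless both ends of the edge that moves
across the torus are defects. -/
lemma wt_le_wt_add_sweep {β : ℝ} (hβ : 0 ≤ β) {D : Defects L} {d : ZMod L × ZMod L} {c : ZMod L}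
    (hc : c ≠ d.2) (hd : D d = 1) (hdc : D (d.1, c) = 1) (x : ZMod L × ZMod L) :
    wt β D ≤ wt β (D + sweep d c x) * Real.exp (2 * β)
      * ((ind ((D + sweep d c x) (x.1, c)) + Real.exp (-2 * β))
        * (ind ((D + sweep d c x) (x.1 + 1, d.2)) + Real.exp (-2 * β))) := by
  have hcount := mul_le_mul_of_nonneg_left (count_add_sweep_le hc hd hdc x) hβ
  set S := D + sweep d c x
  calc wt β D ≤ wt β S * (Real.exp (β * (2 * ind (S (x.1, c)) - 1))
          * Real.exp (β * (2 * ind (S (x.1 + 1, d.2)) - 1))) := by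
        rw [wt, wt, ← Real.exp_add, ← Real.exp_add, Real.exp_le_exp]
        linarith
    _ ≤ wt β S * ((Real.exp β * (ind (S (x.1, c)) + Real.exp (-2 * β)))
          * (Real.exp β * (ind (S (x.1 + 1, d.2)) + Real.exp (-2 * β)))) := by
        refine mul_le_mul_of_nonneg_left ?_ (wt_pos _ _).le
        exact mul_le_mul (exp_mul_two_mul_ind_sub_one_le _ _) (exp_mul_two_mul_ind_sub_one_le _ _)
          (Real.exp_pos _).le
          (mul_nonneg (Real.exp_pos _).le (add_nonneg (ind_nonneg _) (Real.exp_pos _).le))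
    _ = _ := by
        rw [two_mul, Real.exp_add]
        ring

lemma wt_le_wt_add_rect (β : ℝ) {D : Defects L} {d e : ZMod L × ZMod L} (hcol : e.2 ≠ d.2)
    (hrow : e.1 ≠ d.1) (hd : D d = 1) (hde : D (d.1, e.2) = 1) (hed : D (e.1, d.2) = 1) :
    wt β D ≤ wt β (D + rect d e)
      * (Real.exp (-2 * β) * ind ((D + rect d e) e) + Real.exp (-4 * β)) := by
  have hcorners := count_add_pt_add_pt (q := (d.1, e.2)) (ne_of_apply_ne Prod.snd hcol) hd hde
  have hthird : count (D + pt d + pt (d.1, e.2) + pt (e.1, d.2)) = count D - 3 := by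
    rw [count_add_single_of_eq_one, hcorners]
    · ring
    · have hne : ∀ c, pt (d.1, c) (e.1, d.2) = 0 := fun c =>
        pt_apply_of_ne (ne_of_apply_ne Prod.fst hrow)
      rw [Pi.add_apply, Pi.add_apply, hne d.2, hne e.2, hed, add_zero, add_zero]
  have hcount := count_add_single' (D + pt d + pt (d.1, e.2) + pt (e.1, d.2)) e
  rw [hthird, show D + pt d + pt (d.1, e.2) + pt (e.1, d.2) + pt e = D + rect d e by
    rw [rect]; abel] at hcount
  have hwt : wt β D
      = wt β (D + rect d e) * Real.exp (-β * (4 - 2 * ind ((D + rect d e) e))) := by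
    rw [wt, wt, ← Real.exp_add, hcount]
    ring_nf
  rw [hwt]
  refine mul_le_mul_of_nonneg_left ?_ (wt_pos _ _).le
  rcases eq_one_or_eq_zero ((D + rect d e) e) with h | h <;> rw [h]
  · rw [ind_one, mul_one, mul_one, show -β * (4 - 2) = -2 * β by ring]
    exact le_add_of_nonneg_right (Real.exp_pos _).le
  · rw [ind_zero, mul_zero, mul_zero, zero_add, show -β * (4 - 0) = -4 * β by ring]

/-! ### Gaps between consecutive defects -/

/-- The distance from `c` to the next point of `s`, going around the circle. -/
def gap (s : Finset (ZMod L)) (c : ZMod L) : ℕ := sInf {w : ℕ | 0 < w ∧ c + w ∈ s}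

variable {s : Finset (ZMod L)} {c : ZMod L}

omit [NeZero L] in
lemma gap_le {w : ℕ} (hw : 0 < w) (h : c + w ∈ s) : gap s c ≤ w := Nat.sInf_le ⟨hw, h⟩

lemma gap_pos_and_add_gap_mem (hc : c ∈ s) : 0 < gap s c ∧ c + gap s c ∈ s :=
  Nat.sInf_mem (s := {w : ℕ | 0 < w ∧ c + w ∈ s}) ⟨L, NeZero.pos L, by simpa using hc⟩

lemma gap_le_size (hc : c ∈ s) : gap s c ≤ L := gap_le (NeZero.pos L) (by simpa using hc)

lemma add_gap_ne {c' : ZMod L} (hc : c ∈ s) (hc' : c' ∈ s) (hne : c' ≠ c) : c + gap s c ≠ c := by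
  have hle : gap s c ≤ (c' - c).val := by
    refine gap_le (ZMod.val_pos.2 (sub_ne_zero.2 hne)) ?_
    rwa [ZMod.natCast_zmod_val, add_sub_cancel]
  rw [Ne, add_eq_left, ZMod.natCast_eq_zero_iff]
  exact Nat.not_dvd_of_pos_of_lt (gap_pos_and_add_gap_mem hc).1 (hle.trans_lt (ZMod.val_lt _))

/-- The arcs from the points of `s` to their successors are disjoint. -/
lemma sum_gap_le (s : Finset (ZMod L)) : ∑ c ∈ s, gap s c ≤ L := by
  have hlt : ∀ c ∈ s, ∀ c', ∀ i j : ℕ, j < gap s c' → c + i = c' + j → j ≤ i := by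
    intro c hc c' i j hj heq
    by_contra! hij
    have hmem : c' + ((j - i : ℕ) : ZMod L) = c := by
      rw [Nat.cast_sub hij.le]; linear_combination -heq
    have := gap_le (Nat.sub_pos_of_lt hij) (hmem ▸ hc)
    omega
  calc ∑ c ∈ s, gap s c = (s.sigma fun c => Finset.range (gap s c)).card := by
        simp [Finset.card_sigma]
    _ ≤ (Finset.univ : Finset (ZMod L)).card := by
        refine Finset.card_le_card_of_injOn (fun q => q.1 + q.2) (fun _ _ => by simp) ?_
        rintro ⟨c, i⟩ hci ⟨c', j⟩ hcj heq
        simp only [Finset.coe_sigma, Set.mem_sigma_iff, Finset.mem_coe, Finset.mem_range] at hci hcj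
        obtain rfl : i = j := le_antisymm (hlt c' hcj.1 c j i hci.2 heq.symm)
          (hlt c hci.1 c' i j hcj.2 heq)
        obtain rfl : c = c' := add_right_cancel heq
        rfl
    _ = L := by simp

/-! ### The total rate of the rectangle moves -/

/-- The distance to the next defect of the row. -/
def width (D : Defects L) (d : ZMod L × ZMod L) : ℕ := gap (ones fun c => D (d.1, c)) d.2

/-- The distance to the next defect of the column. -/
def height (D : Defects L) (d : ZMod L × ZMod L) : ℕ := gap (ones fun r => D (r, d.2)) d.1

/-- The corner opposite to `d` of the rectangle spanned by `d` and the next defects of its row and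
its column. -/
def opposite (D : Defects L) (d : ZMod L × ZMod L) : ZMod L × ZMod L :=
  (d.1 + height D d, d.2 + width D d)

/-- The field obtained by toggling the corners of the rectangle spanned by `d` and the next defects
of its row and its column. -/
def target (D : Defects L) (d : ZMod L × ZMod L) : Defects L := D + rect d (opposite D d)

/-- The congestion factor of a field. The `7` leaves room for the defects that a sweep adds to a
row, see `rowCount_add_sweep_le`. -/
def load (D : Defects L) : ℝ := ∑ r, (rowCount D r + 7) ^ 2

/-- The rate at which the auxiliary chain of rectangle moves goes from `D` to `target D d`, for a
defect `d` of `D`. -/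
def rate (D : Defects L) (d : ZMod L × ZMod L) : ℝ := 1 / (width D d * height D d * load D)

lemma sum_ones_prod (D : Defects L) (F : ZMod L × ZMod L → ℝ) :
    ∑ d ∈ ones D, F d = ∑ r, ∑ c ∈ ones fun c => D (r, c), F (r, c) := by
  simp only [← sum_ind_mul, Fintype.sum_prod_type]

lemma sum_ones_prod_right (D : Defects L) (F : ZMod L × ZMod L → ℝ) :
    ∑ d ∈ ones D, F d = ∑ c, ∑ r ∈ ones fun r => D (r, c), F (r, c) := by
  simp only [← sum_ind_mul, Fintype.sum_prod_type_right]

lemma mem_ones_row {D : Defects L} {d : ZMod L × ZMod L} :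
    d.2 ∈ (ones fun c => D (d.1, c)) ↔ d ∈ ones D := by
  rw [mem_ones, mem_ones]

lemma mem_ones_col {D : Defects L} {d : ZMod L × ZMod L} :
    d.1 ∈ (ones fun r => D (r, d.2)) ↔ d ∈ ones D := by
  rw [mem_ones, mem_ones]

lemma sum_const_size (a : ℝ) : ∑ _r : ZMod L, a = L * a := by simp

section

variable {D : Defects L} {d : ZMod L × ZMod L}

lemma one_le_width (hd : d ∈ ones D) : (1 : ℝ) ≤ width D d :=
  Nat.one_le_cast.2 (gap_pos_and_add_gap_mem (mem_ones_row.2 hd)).1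

lemma one_le_height (hd : d ∈ ones D) : (1 : ℝ) ≤ height D d :=
  Nat.one_le_cast.2 (gap_pos_and_add_gap_mem (mem_ones_col.2 hd)).1

lemma width_le (hd : d ∈ ones D) : width D d ≤ L := gap_le_size (mem_ones_row.2 hd)

lemma height_le (hd : d ∈ ones D) : height D d ≤ L := gap_le_size (mem_ones_col.2 hd)

end

lemma sum_width_le (D : Defects L) (r : ZMod L) :
    ∑ c ∈ ones fun c => D (r, c), (width D (r, c) : ℝ) ≤ L := by
  exact_mod_cast sum_gap_le (ones fun c => D (r, c))

lemma sum_height_le (D : Defects L) (c : ZMod L) :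
    ∑ r ∈ ones fun r => D (r, c), (height D (r, c) : ℝ) ≤ L := by
  exact_mod_cast sum_gap_le (ones fun r => D (r, c))

lemma load_ge (D : Defects L) : 49 * (L : ℝ) ≤ load D := by
  rw [mul_comm, ← sum_const_size]
  exact Finset.sum_le_sum fun r _ => by nlinarith [rowCount_nonneg D r]

lemma load_pos (D : Defects L) : 0 < load D := by
  linarith [load_ge D, one_le_size (L := L)]

lemma load_le (D : Defects L) : load D ≤ 2 * ∑ r, rowCount D r ^ 2 + 98 * L := by
  calc load D ≤ ∑ r, (2 * rowCount D r ^ 2 + 98) :=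
        Finset.sum_le_sum fun r _ => by nlinarith [sq_nonneg (rowCount D r - 7)]
    _ = _ := by rw [Finset.sum_add_distrib, ← Finset.mul_sum, sum_const_size, mul_comm 98]

lemma rate_nonneg (D : Defects L) (d : ZMod L × ZMod L) : 0 ≤ rate D d := by
  have := load_pos D
  unfold rate
  positivity

section

variable {ι : Type*} {s : Finset ι} {w t : ι → ℝ} {M : ℝ}

lemma card_sq_div_le_sum_one_div (hw : ∀ i ∈ s, 0 < w i) (hM : ∑ i ∈ s, w i ≤ M) :
    (s.card : ℝ) ^ 2 / M ≤ ∑ i ∈ s, 1 / w i := by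
  rcases s.eq_empty_or_nonempty with rfl | hs
  · simp
  calc (s.card : ℝ) ^ 2 / M ≤ (s.card : ℝ) ^ 2 / ∑ i ∈ s, w i :=
        div_le_div_of_nonneg_left (sq_nonneg _) (Finset.sum_pos hw hs) hM
    _ ≤ ∑ i ∈ s, 1 / w i := by
        simpa using Finset.sq_sum_div_le_sum_sq_div s (fun _ => (1 : ℝ)) hw

lemma card_pow_three_div_le_sum_one_div_mul (hw : ∀ i ∈ s, 0 < w i) (ht : ∀ i ∈ s, 0 < t i)
    (hwM : ∑ i ∈ s, w i ≤ M) (htM : ∑ i ∈ s, t i ≤ M) :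
    (s.card : ℝ) ^ 3 / M ^ 2 ≤ ∑ i ∈ s, 1 / (w i * t i) := by
  rcases s.eq_empty_or_nonempty with rfl | hs
  · simp
  have hcard : (0 : ℝ) < s.card := Nat.cast_pos.2 hs.card_pos
  have hM : 0 < M := (Finset.sum_pos hw hs).trans_le hwM
  have hmean : (s.card : ℝ) ^ 2 / M ≤ ∑ i ∈ s, 1 / ((w i + t i) / 2) := by
    refine card_sq_div_le_sum_one_div (fun i hi => by linarith [hw i hi, ht i hi]) ?_
    rw [← Finset.sum_div, Finset.sum_add_distrib]
    linarith
  have hcauchy : ((s.card : ℝ) ^ 2 / M) ^ 2 ≤ s.card * ∑ i ∈ s, (1 / ((w i + t i) / 2)) ^ 2 :=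
    (pow_le_pow_left₀ (by positivity) hmean 2).trans sq_sum_le_card_mul_sum_sq
  calc (s.card : ℝ) ^ 3 / M ^ 2 = ((s.card : ℝ) ^ 2 / M) ^ 2 / s.card := by field_simp
    _ ≤ ∑ i ∈ s, (1 / ((w i + t i) / 2)) ^ 2 := (div_le_iff₀' hcard).2 hcauchy
    _ ≤ ∑ i ∈ s, 1 / (w i * t i) := Finset.sum_le_sum fun i hi => by
        rw [one_div_pow]
        exact one_div_le_one_div_of_le (mul_pos (hw i hi) (ht i hi))
          (by nlinarith [sq_nonneg (w i - t i)])

end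

section

variable (D : Defects L)

lemma count_div_le_sum_one_div :
    count D / (L : ℝ) ^ 2 ≤ ∑ d ∈ ones D, 1 / ((width D d : ℝ) * height D d) := by
  rw [count_eq_card, ← nsmul_one, ← Finset.sum_const, Finset.sum_div]
  refine Finset.sum_le_sum fun d hd => ?_
  have hw := one_le_width hd
  have hh := one_le_height hd
  refine one_div_le_one_div_of_le (by positivity) ?_
  rw [sq]
  exact mul_le_mul (Nat.cast_le.2 (width_le hd)) (Nat.cast_le.2 (height_le hd)) (by positivity)
    (by positivity)

lemma sum_rowCount_sq_div_le_sum_one_div :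
    (∑ r, rowCount D r ^ 2) / (L : ℝ) ^ 2
      ≤ ∑ d ∈ ones D, 1 / ((width D d : ℝ) * height D d) := by
  have hl := one_le_size (L := L)
  rw [sum_ones_prod, Finset.sum_div]
  refine Finset.sum_le_sum fun r _ => ?_
  have hpos : ∀ c ∈ ones fun c => D (r, c), (0 : ℝ) < width D (r, c) := fun c hc =>
    one_pos.trans_le (one_le_width (mem_ones_row.1 hc))
  calc rowCount D r ^ 2 / (L : ℝ) ^ 2 = rowCount D r ^ 2 / L / L := by rw [sq (L : ℝ), div_div]
    _ ≤ (∑ c ∈ ones fun c => D (r, c), 1 / (width D (r, c) : ℝ)) / L := by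
        rw [rowCount, count_eq_card]
        exact div_le_div_of_nonneg_right (card_sq_div_le_sum_one_div hpos (sum_width_le D r))
          (by positivity)
    _ ≤ _ := by
        rw [Finset.sum_div]
        refine Finset.sum_le_sum fun c hc => ?_
        have hd : (r, c) ∈ ones D := mem_ones_row.1 hc
        have hh := one_le_height hd
        rw [div_div]
        exact one_div_le_one_div_of_le (mul_pos (hpos c hc) (by positivity))
          (mul_le_mul_of_nonneg_left (Nat.cast_le.2 (height_le hd)) (hpos c hc).le)

lemma count_pow_three_div_le_sum_one_div :
    count D ^ 3 / (L : ℝ) ^ 4 ≤ ∑ d ∈ ones D, 1 / ((width D d : ℝ) * height D d) := by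
  rw [count_eq_card, show (L : ℝ) ^ 4 = (L ^ 2) ^ 2 by ring]
  refine card_pow_three_div_le_sum_one_div_mul
    (fun d hd => one_pos.trans_le (one_le_width hd))
    (fun d hd => one_pos.trans_le (one_le_height hd)) ?_ ?_
  · rw [sum_ones_prod, sq, ← sum_const_size]
    exact Finset.sum_le_sum fun r _ => sum_width_le D r
  · rw [sum_ones_prod_right, sq, ← sum_const_size]
    exact Finset.sum_le_sum fun c _ => sum_height_le D c

lemma sum_rowCount_sq_le : ∑ r, rowCount D r ^ 2 ≤ count D * L := by
  rw [← sum_rowCount, Finset.sum_mul]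
  exact Finset.sum_le_sum fun r _ => by nlinarith [rowCount_nonneg D r, rowCount_le D r]

lemma count_mul_sum_rowCount_sq_div_le_sum_one_div :
    count D * ∑ r, rowCount D r ^ 2
      ≤ (L ^ 3 * √L) * ∑ d ∈ ones D, 1 / ((width D d : ℝ) * height D d) := by
  have hrow := sum_rowCount_sq_div_le_sum_one_div D
  have hcube := count_pow_three_div_le_sum_one_div D
  have hle := sum_rowCount_sq_le D
  have hn := count_nonneg D
  have hS : 0 ≤ ∑ r, rowCount D r ^ 2 := Finset.sum_nonneg fun _ _ => sq_nonneg _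
  have hl : (0 : ℝ) < L := one_pos.trans_le one_le_size
  have hX : 0 ≤ ∑ d ∈ ones D, 1 / ((width D d : ℝ) * height D d) :=
    Finset.sum_nonneg fun _ _ => by positivity
  set n := count D
  set S := ∑ r, rowCount D r ^ 2
  set X := ∑ d ∈ ones D, 1 / ((width D d : ℝ) * height D d)
  refine (sq_le_sq₀ (by positivity) (by positivity)).1 ?_
  calc (n * S) ^ 2 = n ^ 2 * S * S := by ring
    _ ≤ n ^ 2 * S * (n * L) := by gcongr
    _ = L ^ 7 * (S / L ^ 2 * (n ^ 3 / L ^ 4)) := by field_simp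
    _ ≤ L ^ 7 * (X * X) := by gcongr
    _ = (L ^ 3 * √L * X) ^ 2 := by rw [mul_pow, mul_pow, Real.sq_sqrt hl.le]; ring

lemma count_div_le_sum_rate :
    count D / (100 * (L ^ 3 * √L)) ≤ ∑ d ∈ ones D, rate D d := by
  have hquad := count_mul_sum_rowCount_sq_div_le_sum_one_div D
  have hlin := count_div_le_sum_one_div D
  have hload := load_le D
  have hn := count_nonneg D
  have hl : (0 : ℝ) < L := one_pos.trans_le one_le_size
  have hsqrt : 1 ≤ √(L : ℝ) := Real.one_le_sqrt.2 one_le_size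
  have hrate : ∑ d ∈ ones D, rate D d
      = (∑ d ∈ ones D, 1 / ((width D d : ℝ) * height D d)) / load D := by
    rw [Finset.sum_div]
    exact Finset.sum_congr rfl fun d _ => by rw [rate, div_div]
  have hX : 0 ≤ ∑ d ∈ ones D, 1 / ((width D d : ℝ) * height D d) :=
    Finset.sum_nonneg fun _ _ => by positivity
  rw [hrate, le_div_iff₀ (load_pos D), div_mul_eq_mul_div, div_le_iff₀ (by positivity)]
  rw [div_le_iff₀ (by positivity)] at hlin
  set X := ∑ d ∈ ones D, 1 / ((width D d : ℝ) * height D d)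
  have hlin' : count D * L ≤ L ^ 3 * √L * X :=
    calc count D * L ≤ X * L ^ 2 * L := by gcongr
      _ = L ^ 3 * 1 * X := by ring
      _ ≤ L ^ 3 * √L * X := by gcongr
  linarith [mul_le_mul_of_nonneg_left hload hn]

end

/-! ### Comparison of the rectangle moves with the flips -/

/-- The Metropolis dynamics of the defects, reversible for the Boltzmann weight. -/
def defectChain (β : ℝ) : ReversibleChain (Defects L) (ZMod L × ZMod L) :=
  ReversibleChain.metropolis toggle toggle_toggle (wt β) (wt_pos β)

/-- The kernel `1 / (ρ + 1)`, for the representative `0 ≤ ρ < L`. -/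
def decay (ρ : ZMod L) : ℝ := ((ρ.val : ℝ) + 1)⁻¹

omit [NeZero L] in
lemma decay_nonneg (ρ : ZMod L) : 0 ≤ decay ρ := by unfold decay; positivity

omit [NeZero L] in
lemma decay_natCast {i : ℕ} (hi : i < L) : decay (i : ZMod L) = ((i : ℝ) + 1)⁻¹ := by
  rw [decay, ZMod.val_cast_of_lt hi]

lemma sum_range_natCast (g : ZMod L → ℝ) : ∑ i ∈ Finset.range L, g i = ∑ x, g x :=
  Finset.sum_nbij' (fun i : ℕ => (i : ZMod L)) ZMod.val (fun _ _ => Finset.mem_univ _)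
    (fun x _ => Finset.mem_range.2 (ZMod.val_lt x))
    (fun _ hi => ZMod.val_cast_of_lt (Finset.mem_range.1 hi))
    (fun x _ => ZMod.natCast_zmod_val x) fun _ _ => rfl

lemma sum_range_add_natCast_le {g : ZMod L → ℝ} (hg : ∀ x, 0 ≤ g x) {m : ℕ} (hm : m ≤ L)
    (a : ZMod L) : ∑ i ∈ Finset.range m, g (a + i) ≤ ∑ x, g x :=
  calc ∑ i ∈ Finset.range m, g (a + i) ≤ ∑ i ∈ Finset.range L, g (a + i) :=
        Finset.sum_le_sum_of_subset_of_nonneg (Finset.range_mono hm) fun _ _ _ => hg _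
    _ = ∑ x, g (a + x) := sum_range_natCast fun x => g (a + x)
    _ = ∑ x, g x := Equiv.sum_comp (Equiv.addLeft a) g

lemma sum_decay_sub (ρ : ZMod L) : ∑ r, decay (ρ - r) = harmonic L := by
  calc ∑ r, decay (ρ - r) = ∑ r, decay r := Equiv.sum_comp (Equiv.subLeft ρ) decay
    _ = ∑ i ∈ Finset.range L, ((i : ℝ) + 1)⁻¹ := by
        rw [← sum_range_natCast]
        exact Finset.sum_congr rfl fun i hi => decay_natCast (Finset.mem_range.1 hi)
    _ = harmonic L := by rw [harmonic]; push_cast; rfl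

lemma harmonic_nonneg (L : ℕ) : (0 : ℝ) ≤ harmonic L := by
  rw [harmonic]
  positivity

/-- Each `k` is charged by at most one `D` for every `S = D + v k`. -/
lemma sum_isEven_le_of_translate {κ : Type*} [Fintype κ] {F : Defects L → ℝ}
    {G : κ → Defects L → ℝ} {v : κ → Defects L} (hG : ∀ k S, 0 ≤ G k S)
    (h : ∀ D, IsEven D → F D ≤ ∑ k, G k (D + v k)) :
    ∑ D with IsEven D, F D ≤ ∑ S, ∑ k, G k S :=
  calc ∑ D with IsEven D, F D ≤ ∑ D with IsEven D, ∑ k, G k (D + v k) :=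
        Finset.sum_le_sum fun D hD => h D (Finset.mem_filter.1 hD).2
    _ ≤ ∑ D, ∑ k, G k (D + v k) :=
        Finset.sum_le_sum_of_subset_of_nonneg (Finset.filter_subset _ _)
          fun _ _ _ => Finset.sum_nonneg fun k _ => hG k _
    _ = ∑ k, ∑ D, G k (D + v k) := Finset.sum_comm
    _ = ∑ k, ∑ S, G k S :=
        Finset.sum_congr rfl fun k _ => Equiv.sum_comp (Equiv.addRight (v k)) (G k)
    _ = ∑ S, ∑ k, G k S := Finset.sum_comm

lemma sum_ones_le {D : Defects L} {F G : ZMod L × ZMod L → ℝ} (hG : ∀ d, 0 ≤ G d)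
    (h : ∀ d ∈ ones D, F d ≤ G d) : ∑ d ∈ ones D, F d ≤ ∑ d, G d :=
  (Finset.sum_le_sum h).trans (Finset.sum_le_univ_sum_of_nonneg hG)

section

variable {D : Defects L} {d : ZMod L × ZMod L}

lemma opposite_snd_ne (hD : IsEven D) (hd : d ∈ ones D) : (opposite D d).2 ≠ d.2 :=
  have ⟨_, hne, hc⟩ := exists_ne_of_sum_eq_zero (hD.1 d.1) (mem_ones.1 hd)
  add_gap_ne (mem_ones_row.2 hd) (mem_ones.2 hc) hne

lemma opposite_fst_ne (hD : IsEven D) (hd : d ∈ ones D) : (opposite D d).1 ≠ d.1 :=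
  have ⟨_, hne, hr⟩ := exists_ne_of_sum_eq_zero (hD.2 d.2) (mem_ones.1 hd)
  add_gap_ne (mem_ones_col.2 hd) (mem_ones.2 hr) hne

lemma apply_opposite_snd (hd : d ∈ ones D) : D (d.1, (opposite D d).2) = 1 :=
  mem_ones.1 (mem_ones_row.1 (gap_pos_and_add_gap_mem (mem_ones_row.2 hd)).2)

lemma apply_opposite_fst (hd : d ∈ ones D) : D ((opposite D d).1, d.2) = 1 :=
  mem_ones.1 (mem_ones_col.1 (gap_pos_and_add_gap_mem (mem_ones_col.2 hd)).2)

lemma rate_le_decay (hD : IsEven D) (hd : d ∈ ones D) :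
    rate D d ≤ 2 / (49 * L) * decay ((opposite D d).1 - d.1) := by
  have hw := one_le_width hd
  have hh := one_le_height hd
  have hl : (0 : ℝ) < L := one_pos.trans_le one_le_size
  have hload := load_pos D
  have hlt : height D d < L := (height_le hd).lt_of_ne fun heq =>
    opposite_fst_ne hD hd (by rw [opposite, heq, ZMod.natCast_self, add_zero])
  rw [opposite, add_sub_cancel_left, decay_natCast hlt, ← div_eq_mul_inv, div_div, rate,
    div_le_div_iff₀ (by positivity) (by positivity)]
  calc 1 * (49 * (L : ℝ) * (height D d + 1)) ≤ 1 * (load D * (height D d + height D d)) := by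
        gcongr
        exact load_ge D
    _ = 2 * (1 * height D d * load D) := by ring
    _ ≤ 2 * (width D d * height D d * load D) := by
        gcongr

end

/-- The part of the weight of `S` that is charged by the rectangle moves to `S` whose new corner is
`e`. -/
def cornerFlow (β : ℝ) (S : Defects L) (e : ZMod L × ZMod L) : ℝ :=
  wt β S * (Real.exp (-2 * β) * ind (S e) + Real.exp (-4 * β))

lemma cornerFlow_nonneg (β : ℝ) (S : Defects L) (e : ZMod L × ZMod L) : 0 ≤ cornerFlow β S e := by
  have := wt_pos β S
  have := ind_nonneg (S e)
  unfold cornerFlow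
  positivity

lemma sum_cornerFlow (β : ℝ) (S : Defects L) :
    ∑ e, cornerFlow β S e
      = wt β S * (Real.exp (-2 * β) * (count S + L ^ 2 * Real.exp (-2 * β))) := by
  simp only [cornerFlow, ← Finset.mul_sum, Finset.sum_add_distrib, Finset.sum_const]
  rw [show -4 * β = -2 * β + -2 * β by ring, Real.exp_add, Finset.card_univ, Fintype.card_prod,
    ZMod.card, nsmul_eq_mul, count]
  push_cast
  ring

lemma sum_cornerFlow_mul_sq_le {β : ℝ} (hL : (L : ℝ) ^ 2 * Real.exp (-2 * β) ≤ 1)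
    {f : Defects L → ℝ} (hf : f 0 = 0) (S : Defects L) :
    (∑ e, cornerFlow β S e) * f S ^ 2
      ≤ 2 * Real.exp (-2 * β) * (wt β S * count S * f S ^ 2) := by
  rcases eq_or_ne S 0 with rfl | hS
  · simp [hf]
  have hwt := wt_pos β S
  calc (∑ e, cornerFlow β S e) * f S ^ 2
      ≤ wt β S * (Real.exp (-2 * β) * (count S + count S)) * f S ^ 2 := by
        rw [sum_cornerFlow]
        gcongr
        exact hL.trans (one_le_count hS)
    _ = _ := by ring

lemma wt_mul_rate_mul_target_sq_le (β : ℝ) (f : Defects L → ℝ) {D : Defects L} (hD : IsEven D)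
    {d : ZMod L × ZMod L} (hd : d ∈ ones D) :
    wt β D * rate D d * f (target D d) ^ 2 ≤ decay ((opposite D d).1 - d.1)
      * (2 / (49 * L) * (cornerFlow β (target D d) (opposite D d) * f (target D d) ^ 2)) := by
  have hwt : wt β D ≤ cornerFlow β (target D d) (opposite D d) :=
    wt_le_wt_add_rect β (opposite_snd_ne hD hd) (opposite_fst_ne hD hd) (mem_ones.1 hd)
      (apply_opposite_snd hd) (apply_opposite_fst hd)
  calc wt β D * rate D d * f (target D d) ^ 2
      = rate D d * (wt β D * f (target D d) ^ 2) := by ring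
    _ ≤ 2 / (49 * L) * decay ((opposite D d).1 - d.1)
          * (cornerFlow β (target D d) (opposite D d) * f (target D d) ^ 2) :=
        mul_le_mul (rate_le_decay hD hd) (mul_le_mul_of_nonneg_right hwt (sq_nonneg _))
          (mul_nonneg (wt_pos _ _).le (sq_nonneg _))
          (mul_nonneg (by positivity) (decay_nonneg _))
    _ = _ := by ring

lemma sum_rate_mul_target_sq_le {β : ℝ} (hL : (L : ℝ) ^ 2 * Real.exp (-2 * β) ≤ 1)
    {f : Defects L → ℝ} (hf : f 0 = 0) :
    ∑ D with IsEven D, ∑ d ∈ ones D, wt β D * rate D d * f (target D d) ^ 2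
      ≤ harmonic L * Real.exp (-2 * β) * ∑ D, wt β D * count D * f D ^ 2 := by
  have hl : (0 : ℝ) < L := one_pos.trans_le one_le_size
  have hH := harmonic_nonneg L
  let G : (ZMod L × ZMod L) × ZMod L × ZMod L → Defects L → ℝ := fun k S =>
    decay (k.2.1 - k.1.1) * (2 / (49 * L) * (cornerFlow β S k.2 * f S ^ 2))
  have hG : ∀ k S, 0 ≤ G k S := fun k S =>
    mul_nonneg (decay_nonneg _) (mul_nonneg (by positivity)
      (mul_nonneg (cornerFlow_nonneg _ _ _) (sq_nonneg _)))
  have hmove : ∀ D, IsEven D → ∑ d ∈ ones D, wt β D * rate D d * f (target D d) ^ 2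
      ≤ ∑ k, G k (D + rect k.1 k.2) := fun D hD => by
    rw [Fintype.sum_prod_type]
    exact sum_ones_le (fun d => Finset.sum_nonneg fun e _ => hG (d, e) _) fun d hd =>
      (wt_mul_rate_mul_target_sq_le β f hD hd).trans
        (Finset.single_le_sum (f := fun e => G (d, e) (D + rect d e))
          (fun e _ => hG (d, e) _) (Finset.mem_univ (opposite D d)))
  refine (sum_isEven_le_of_translate hG hmove).trans ?_
  rw [Finset.mul_sum]
  refine Finset.sum_le_sum fun S _ => ?_
  calc ∑ k, G k S
      = ∑ e, L * harmonic L * (2 / (49 * L) * (cornerFlow β S e * f S ^ 2)) := by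
        rw [Fintype.sum_prod_type_right]
        refine Finset.sum_congr rfl fun e _ => ?_
        simp only [G, ← Finset.sum_mul, Fintype.sum_prod_type_right, sum_decay_sub, sum_const_size]
    _ = 2 / 49 * harmonic L * ((∑ e, cornerFlow β S e) * f S ^ 2) := by
        rw [Finset.sum_mul, Finset.mul_sum]
        exact Finset.sum_congr rfl fun e _ => by field_simp
    _ ≤ 2 / 49 * harmonic L * (2 * Real.exp (-2 * β) * (wt β S * count S * f S ^ 2)) := by
        exact mul_le_mul_of_nonneg_left (sum_cornerFlow_mul_sq_le hL hf S) (by positivity)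
    _ ≤ harmonic L * Real.exp (-2 * β) * (wt β S * count S * f S ^ 2) := by
        have : 0 ≤ harmonic L * Real.exp (-2 * β) * (wt β S * count S * f S ^ 2) := by
          have := wt_pos β S
          have := count_nonneg S
          positivity
        linarith

omit [NeZero L] in
lemma sub_eq_sum_sweep (f : Defects L → ℝ) (D : Defects L) (d : ZMod L × ZMod L) (h w : ℕ) :
    f (D + rect d (d.1 + h, d.2 + w)) - f D = ∑ i ∈ Finset.range h, ∑ j ∈ Finset.range w,
      (f (toggle (d.1 + i, d.2 + j) (D + sweep d (d.2 + w) (d.1 + i, d.2 + j)))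
        - f (D + sweep d (d.2 + w) (d.1 + i, d.2 + j))) := by
  have hrow : ∀ i : ℕ, ∑ j ∈ Finset.range w,
      (f (toggle (d.1 + i, d.2 + j) (D + sweep d (d.2 + w) (d.1 + i, d.2 + j)))
        - f (D + sweep d (d.2 + w) (d.1 + i, d.2 + j)))
      = f (D + sweep d (d.2 + w) (d.1 + (i + 1 : ℕ), d.2))
        - f (D + sweep d (d.2 + w) (d.1 + i, d.2)) := by
    intro i
    have hstep : ∀ j : ℕ, toggle (d.1 + (i : ZMod L), d.2 + (j : ZMod L))
        (D + sweep d (d.2 + w) (d.1 + i, d.2 + j))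
        = D + sweep d (d.2 + w) (d.1 + i, d.2 + (j + 1 : ℕ)) := fun j => by
      rw [← sweep_succ, Nat.cast_succ, add_assoc d.2]
    simp only [hstep]
    rw [Finset.sum_range_sub fun j : ℕ => f (D + sweep d (d.2 + w) (d.1 + i, d.2 + j)),
      Nat.cast_zero, add_zero, sweep_row_end, Nat.cast_succ, add_assoc d.1]
  simp only [hrow]
  rw [Finset.sum_range_sub fun i : ℕ => f (D + sweep d (d.2 + w) (d.1 + i, d.2)), Nat.cast_zero,
    add_zero, sweep_self, add_zero, sweep_row_start]

/-- The congestion factor of the sweeps across the rows `r` and `r + 1`. -/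
def rowLoad (D : Defects L) (r : ZMod L) : ℝ := (rowCount D r + 7) * (rowCount D (r + 1) + 7)

lemma rowLoad_pos (D : Defects L) (r : ZMod L) : 0 < rowLoad D r :=
  mul_pos (by linarith [rowCount_nonneg D r]) (by linarith [rowCount_nonneg D (r + 1)])

lemma sum_rowLoad_le (D : Defects L) : ∑ r, rowLoad D r ≤ load D :=
  calc ∑ r, rowLoad D r ≤ ∑ r, ((rowCount D r + 7) ^ 2 / 2 + (rowCount D (r + 1) + 7) ^ 2 / 2) :=
        Finset.sum_le_sum fun r _ => by
          rw [rowLoad]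
          nlinarith [sq_nonneg (rowCount D r - rowCount D (r + 1))]
    _ = load D / 2 + load D / 2 := by
        rw [Finset.sum_add_distrib, ← Finset.sum_div, ← Finset.sum_div, load]
        congr 2
        exact Equiv.sum_comp (Equiv.addRight 1) fun r => (rowCount D r + 7) ^ 2
    _ = load D := add_halves _

lemma sq_sum_rectangle_le (D : Defects L) (r : ZMod L) {h : ℕ} (hh : h ≤ L) (w : ℕ)
    (a : ℕ → ℕ → ℝ) :
    (∑ i ∈ Finset.range h, ∑ j ∈ Finset.range w, a i j) ^ 2
      ≤ w * load D * ∑ i ∈ Finset.range h, ∑ j ∈ Finset.range w,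
          a i j ^ 2 / rowLoad D (r + i) := by
  have hpos := rowLoad_pos D
  have hload : ∑ q ∈ Finset.range h ×ˢ Finset.range w, rowLoad D (r + q.1) ≤ w * load D := by
    simp only [Finset.sum_product, Finset.sum_const, Finset.card_range, nsmul_eq_mul,
      ← Finset.mul_sum]
    exact mul_le_mul_of_nonneg_left
      ((sum_range_add_natCast_le (fun r => (hpos r).le) hh r).trans (sum_rowLoad_le D))
      (Nat.cast_nonneg w)
  rw [← Finset.sum_product', ← Finset.sum_product']
  refine (Finset.sum_sq_le_sum_mul_sum_of_sq_le_mul _ (fun q _ => (hpos (r + q.1)).le)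
    (fun q _ => div_nonneg (sq_nonneg (a q.1 q.2)) (hpos (r + q.1)).le)
    fun q _ => (mul_div_cancel₀ _ (hpos _).ne').ge).trans ?_
  exact mul_le_mul_of_nonneg_right hload
    (Finset.sum_nonneg fun q _ => div_nonneg (sq_nonneg _) (hpos _).le)

/-- The squared increment of `f` along the flip at `x`. -/
def incSq (f : Defects L → ℝ) (x : ZMod L × ZMod L) (S : Defects L) : ℝ :=
  (f (toggle x S) - f S) ^ 2

omit [NeZero L] in
lemma incSq_nonneg (f : Defects L → ℝ) (x : ZMod L × ZMod L) (S : Defects L) : 0 ≤ incSq f x S :=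
  sq_nonneg _

lemma inv_mul_sum_rectangle_le {F : ZMod L × ZMod L → ℝ} (hF : ∀ x, 0 ≤ F x) {h w : ℕ}
    (hh : h ≤ L) (hw : w ≤ L) (d : ZMod L × ZMod L) :
    (h : ℝ)⁻¹ * ∑ i ∈ Finset.range h, ∑ j ∈ Finset.range w, F (d.1 + i, d.2 + j)
      ≤ ∑ x, decay (x.1 - d.1) * F x := by
  have hrow : ∀ i ∈ Finset.range h,
      (h : ℝ)⁻¹ * ∑ j ∈ Finset.range w, F (d.1 + i, d.2 + j)
        ≤ decay (d.1 + (i : ZMod L) - d.1) * ∑ c, F (d.1 + i, c) := fun i hi => by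
    have hi : i < h := Finset.mem_range.1 hi
    rw [add_sub_cancel_left, decay_natCast (hi.trans_le hh)]
    exact mul_le_mul (inv_anti₀ (by positivity) (by exact_mod_cast hi))
      (sum_range_add_natCast_le (fun c => hF (_, c)) hw d.2)
      (Finset.sum_nonneg fun _ _ => hF _) (by positivity)
  calc (h : ℝ)⁻¹ * ∑ i ∈ Finset.range h, ∑ j ∈ Finset.range w, F (d.1 + i, d.2 + j)
      ≤ ∑ i ∈ Finset.range h, decay (d.1 + (i : ZMod L) - d.1) * ∑ c, F (d.1 + i, c) := by
        rw [Finset.mul_sum]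
        exact Finset.sum_le_sum hrow
    _ ≤ ∑ r, decay (r - d.1) * ∑ c, F (r, c) :=
        sum_range_add_natCast_le (g := fun r => decay (r - d.1) * ∑ c, F (r, c))
          (fun r => mul_nonneg (decay_nonneg _) (Finset.sum_nonneg fun c _ => hF (r, c))) hh d.1
    _ = _ := by simp only [Fintype.sum_prod_type, Finset.mul_sum]

lemma sub_target_sq_le (f : Defects L → ℝ) {D : Defects L} {d : ZMod L × ZMod L}
    (hd : d ∈ ones D) {F : ZMod L × ZMod L → ℝ}
    (hF : ∀ x, F x = incSq f x (D + sweep d (opposite D d).2 x) / rowLoad D x.1) :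
    (f (target D d) - f D) ^ 2 ≤ width D d * load D * ∑ i ∈ Finset.range (height D d),
      ∑ j ∈ Finset.range (width D d), F (d.1 + i, d.2 + j) := by
  simp only [hF, incSq]
  rw [target, opposite, sub_eq_sum_sweep]
  exact sq_sum_rectangle_le D d.1 (height_le hd) (width D d) fun i j =>
    f (toggle (d.1 + i, d.2 + j) (D + sweep d (d.2 + width D d) (d.1 + i, d.2 + j)))
      - f (D + sweep d (d.2 + width D d) (d.1 + i, d.2 + j))

lemma rate_mul_sub_target_sq_le (f : Defects L → ℝ) {D : Defects L} {d : ZMod L × ZMod L}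
    (hd : d ∈ ones D) :
    rate D d * (f (target D d) - f D) ^ 2
      ≤ ∑ x, decay (x.1 - d.1) * (incSq f x (D + sweep d (opposite D d).2 x) / rowLoad D x.1) := by
  have hw := one_le_width hd
  have hload := load_pos D
  obtain ⟨F, hF⟩ : ∃ F : ZMod L × ZMod L → ℝ,
      ∀ x, F x = incSq f x (D + sweep d (opposite D d).2 x) / rowLoad D x.1 := ⟨_, fun _ => rfl⟩
  have hF0 : ∀ x, 0 ≤ F x := fun x => by
    rw [hF]
    exact div_nonneg (incSq_nonneg _ _ _) (rowLoad_pos D x.1).le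
  simp only [← hF]
  calc rate D d * (f (target D d) - f D) ^ 2
      ≤ rate D d * (width D d * load D * ∑ i ∈ Finset.range (height D d),
          ∑ j ∈ Finset.range (width D d), F (d.1 + i, d.2 + j)) :=
        mul_le_mul_of_nonneg_left (sub_target_sq_le f hd hF) (rate_nonneg D d)
    _ = (height D d : ℝ)⁻¹ * ∑ i ∈ Finset.range (height D d),
          ∑ j ∈ Finset.range (width D d), F (d.1 + i, d.2 + j) := by
        rw [rate]
        field_simp
    _ ≤ ∑ x, decay (x.1 - d.1) * F x :=
        inv_mul_sum_rectangle_le hF0 (height_le hd) (width_le hd) d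

/-- The relative weight of the plaquette `p` in its row, smoothed so that it does not vanish when
`p` is not a defect. -/
def occ (β : ℝ) (S : Defects L) (p : ZMod L × ZMod L) : ℝ :=
  (ind (S p) + Real.exp (-2 * β)) / (rowCount S p.1 + 1)

/-- The part of the weight of `S` that is charged by the sweeps whose moving edge crosses the rows
`r` and `r + 1` from column `c` to column `c'`. -/
def flow (β : ℝ) (S : Defects L) (r c c' : ZMod L) : ℝ :=
  wt β S * Real.exp (2 * β) * (occ β S (r, c') * occ β S (r + 1, c))

lemma occ_nonneg (β : ℝ) (S : Defects L) (p : ZMod L × ZMod L) : 0 ≤ occ β S p :=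
  div_nonneg (add_nonneg (ind_nonneg _) (Real.exp_pos _).le)
    (add_nonneg (rowCount_nonneg S p.1) zero_le_one)

lemma sum_occ_le {β : ℝ} (hL : L * Real.exp (-2 * β) ≤ 1) (S : Defects L) (r : ZMod L) :
    ∑ c, occ β S (r, c) ≤ 1 := by
  simp only [occ, ← Finset.sum_div, Finset.sum_add_distrib, sum_const_size]
  exact div_le_one_of_le₀ (add_le_add_right hL _) (add_nonneg (rowCount_nonneg S r) zero_le_one)

lemma flow_nonneg (β : ℝ) (S : Defects L) (r c c' : ZMod L) : 0 ≤ flow β S r c c' :=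
  mul_nonneg (mul_nonneg (wt_pos β S).le (Real.exp_pos _).le)
    (mul_nonneg (occ_nonneg _ _ _) (occ_nonneg _ _ _))

lemma sum_flow_le {β : ℝ} (hL : L * Real.exp (-2 * β) ≤ 1) (S : Defects L) (r : ZMod L) :
    ∑ c, ∑ c', flow β S r c c' ≤ Real.exp (2 * β) * wt β S := by
  have hocc := sum_occ_le hL S
  calc ∑ c, ∑ c', flow β S r c c'
      = wt β S * Real.exp (2 * β) * ((∑ c', occ β S (r, c')) * ∑ c, occ β S (r + 1, c)) := by
        simp only [flow, ← Finset.mul_sum, ← Finset.sum_mul]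
    _ ≤ wt β S * Real.exp (2 * β) * 1 := by
        have := wt_pos β S
        gcongr
        exact mul_le_one₀ (hocc r) (Finset.sum_nonneg fun _ _ => occ_nonneg _ _ _) (hocc (r + 1))
    _ = _ := by ring

lemma wt_div_rowLoad_le_flow {β : ℝ} (hβ : 0 ≤ β) {D : Defects L} {d : ZMod L × ZMod L}
    {c : ZMod L} (hc : c ≠ d.2) (hd : D d = 1) (hdc : D (d.1, c) = 1) (x : ZMod L × ZMod L) :
    wt β D / rowLoad D x.1 ≤ flow β (D + sweep d c x) x.1 d.2 c := by
  have hwt := wt_le_wt_add_sweep hβ hc hd hdc x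
  have hrow := rowCount_add_sweep_le D d c x
  have hpos := rowCount_nonneg (D + sweep d c x)
  set S := D + sweep d c x
  have hfst : 0 < rowCount S x.1 + 1 := by linarith [hpos x.1]
  have hsnd : 0 < rowCount S (x.1 + 1) + 1 := by linarith [hpos (x.1 + 1)]
  calc wt β D / rowLoad D x.1
      ≤ wt β D / ((rowCount S x.1 + 1) * (rowCount S (x.1 + 1) + 1)) := by
        refine div_le_div_of_nonneg_left (wt_pos _ _).le (mul_pos hfst hsnd) ?_
        exact mul_le_mul (by linarith [hrow x.1]) (by linarith [hrow (x.1 + 1)]) hsnd.le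
          (by linarith [rowCount_nonneg D x.1])
    _ ≤ _ := div_le_div_of_nonneg_right hwt (mul_pos hfst hsnd).le
    _ = flow β S x.1 d.2 c := by
        rw [flow, occ, occ]
        field_simp

/-- The part of the conductance of the flip at `x` that is charged by the sweeps whose moving edge
goes from column `c` to column `c'`. -/
def edgeFlow (β : ℝ) (x : ZMod L × ZMod L) (S : Defects L) (c c' : ZMod L) : ℝ :=
  min (flow β S x.1 c c') (flow β (toggle x S) x.1 c c')

lemma edgeFlow_nonneg (β : ℝ) (x : ZMod L × ZMod L) (S : Defects L) (c c' : ZMod L) :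
    0 ≤ edgeFlow β x S c c' := le_min (flow_nonneg _ _ _ _ _) (flow_nonneg _ _ _ _ _)

lemma sum_edgeFlow_le {β : ℝ} (hL : L * Real.exp (-2 * β) ≤ 1) (x : ZMod L × ZMod L)
    (S : Defects L) :
    ∑ c, ∑ c', edgeFlow β x S c c' ≤ Real.exp (2 * β) * (defectChain β).cond x S := by
  rw [show (defectChain β).cond x S = min (wt β S) (wt β (toggle x S)) from rfl,
    mul_min_of_nonneg _ _ (Real.exp_pos _).le]
  exact le_min
    ((Finset.sum_le_sum fun _ _ => Finset.sum_le_sum fun _ _ => min_le_left _ _).trans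
      (sum_flow_le hL S x.1))
    ((Finset.sum_le_sum fun _ _ => Finset.sum_le_sum fun _ _ => min_le_right _ _).trans
      (sum_flow_le hL (toggle x S) x.1))

lemma wt_div_rowLoad_le_edgeFlow {β : ℝ} (hβ : 0 ≤ β) {D : Defects L} {d : ZMod L × ZMod L}
    {c : ZMod L} (hc : c ≠ d.2) (hd : D d = 1) (hdc : D (d.1, c) = 1) (x : ZMod L × ZMod L) :
    wt β D / rowLoad D x.1 ≤ edgeFlow β x (D + sweep d c x) d.2 c := by
  refine le_min (wt_div_rowLoad_le_flow hβ hc hd hdc x) ?_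
  rw [← sweep_succ]
  exact wt_div_rowLoad_le_flow hβ hc hd hdc (x.1, x.2 + 1)

lemma wt_mul_rate_mul_sub_target_sq_le {β : ℝ} (hβ : 0 ≤ β) (f : Defects L → ℝ) {D : Defects L}
    (hD : IsEven D) {d : ZMod L × ZMod L} (hd : d ∈ ones D) :
    wt β D * rate D d * (f (target D d) - f D) ^ 2
      ≤ ∑ x, decay (x.1 - d.1)
          * (edgeFlow β x (D + sweep d (opposite D d).2 x) d.2 (opposite D d).2
            * incSq f x (D + sweep d (opposite D d).2 x)) := by
  have hflow := wt_div_rowLoad_le_edgeFlow hβ (opposite_snd_ne hD hd) (mem_ones.1 hd)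
    (apply_opposite_snd hd)
  rw [mul_assoc]
  refine (mul_le_mul_of_nonneg_left (rate_mul_sub_target_sq_le f hd) (wt_pos β D).le).trans ?_
  rw [Finset.mul_sum]
  refine Finset.sum_le_sum fun x _ => ?_
  rw [mul_left_comm, mul_div_left_comm, mul_comm (incSq _ _ _)]
  exact mul_le_mul_of_nonneg_left
    (mul_le_mul_of_nonneg_right (hflow x) (incSq_nonneg _ _ _)) (decay_nonneg _)

lemma sum_rate_mul_sub_target_sq_le {β : ℝ} (hβ : 0 ≤ β) (hL : L * Real.exp (-2 * β) ≤ 1)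
    (f : Defects L → ℝ) :
    ∑ D with IsEven D, ∑ d ∈ ones D, wt β D * rate D d * (f (target D d) - f D) ^ 2
      ≤ harmonic L * Real.exp (2 * β) * (2 * (defectChain β).dirichlet f f) := by
  let G : (ZMod L × ZMod L) × (ZMod L × ZMod L) × ZMod L → Defects L → ℝ := fun k S =>
    decay (k.1.1 - k.2.1.1) * (edgeFlow β k.1 S k.2.1.2 k.2.2 * incSq f k.1 S)
  have hG : ∀ k S, 0 ≤ G k S := fun k S =>
    mul_nonneg (decay_nonneg _) (mul_nonneg (edgeFlow_nonneg _ _ _ _ _) (incSq_nonneg _ _ _))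
  have hmove : ∀ D, IsEven D →
      ∑ d ∈ ones D, wt β D * rate D d * (f (target D d) - f D) ^ 2
        ≤ ∑ k, G k (D + sweep k.2.1 k.2.2 k.1) := fun D hD => by
    rw [Fintype.sum_prod_type_right, Fintype.sum_prod_type]
    refine sum_ones_le (fun d => Finset.sum_nonneg fun c _ => Finset.sum_nonneg fun x _ =>
      hG (x, d, c) _) fun d hd => (wt_mul_rate_mul_sub_target_sq_le hβ f hD hd).trans ?_
    exact Finset.single_le_sum (f := fun c => ∑ x, G (x, d, c) (D + sweep d c x))
      (fun c _ => Finset.sum_nonneg fun x _ => hG (x, d, c) _) (Finset.mem_univ (opposite D d).2)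
  refine (sum_isEven_le_of_translate hG hmove).trans ?_
  rw [ReversibleChain.dirichlet, mul_div_cancel₀ _ two_ne_zero, Finset.mul_sum]
  refine Finset.sum_le_sum fun S _ => ?_
  rw [Fintype.sum_prod_type, Finset.mul_sum]
  refine Finset.sum_le_sum fun x _ => ?_
  calc ∑ k : (ZMod L × ZMod L) × ZMod L, G (x, k) S
      = harmonic L * ((∑ c, ∑ c', edgeFlow β x S c c') * incSq f x S) := by
        simp only [G, Fintype.sum_prod_type, ← Finset.mul_sum, ← Finset.sum_mul, sum_decay_sub]
    _ ≤ harmonic L * (Real.exp (2 * β) * (defectChain β).cond x S * incSq f x S) := by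
        have := harmonic_nonneg L
        have := incSq_nonneg f x S
        gcongr
        exact sum_edgeFlow_le hL x S
    _ = _ := by
        rw [incSq, sq, defectChain]
        change _ = _ * _ * (_ * (f (toggle x S) - f S) * (f (toggle x S) - f S))
        ring

/-! ### The Poincaré inequality of the defects below the critical length -/

/-- The nonzero fields with even rows and columns; they include the defects of all the spin
configurations that are not ground states. -/
def excited (L : ℕ) [NeZero L] : Set (Defects L) := {D | IsEven D ∧ D ≠ 0}

lemma sum_wt_mul_count_mul_sq_eq (β : ℝ) {f : Defects L → ℝ} (hf : ∀ D ∉ excited L, f D = 0) :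
    ∑ D, wt β D * count D * f D ^ 2 = ∑ D with IsEven D, wt β D * count D * f D ^ 2 := by
  refine (Finset.sum_filter_of_ne fun D _ hne => ?_).symm
  by_contra hD
  exact hne (by rw [hf D fun h => hD h.1, zero_pow two_ne_zero, mul_zero])

lemma wt_mul_count_mul_sq_div_le (β : ℝ) (f : Defects L → ℝ) (D : Defects L) :
    wt β D * count D * f D ^ 2 / (100 * (L ^ 3 * √L))
      ≤ 2 * (∑ d ∈ ones D, wt β D * rate D d * (f (target D d) - f D) ^ 2)
        + 2 * ∑ d ∈ ones D, wt β D * rate D d * f (target D d) ^ 2 := by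
  calc wt β D * count D * f D ^ 2 / (100 * (L ^ 3 * √L))
      = wt β D * f D ^ 2 * (count D / (100 * (L ^ 3 * √L))) := by ring
    _ ≤ wt β D * f D ^ 2 * ∑ d ∈ ones D, rate D d :=
        mul_le_mul_of_nonneg_left (count_div_le_sum_rate D)
          (mul_nonneg (wt_pos β D).le (sq_nonneg _))
    _ ≤ _ := by
        simp only [Finset.mul_sum, ← Finset.sum_add_distrib]
        refine Finset.sum_le_sum fun d _ => ?_
        have hrate := mul_nonneg (wt_pos β D).le (rate_nonneg D d)
        linarith [mul_nonneg hrate (sq_nonneg (2 * f (target D d) - f D))]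

lemma sum_wt_mul_count_mul_sq_le {β : ℝ} (hβ : 0 ≤ β) (hL : (L : ℝ) ^ 2 * Real.exp (-2 * β) ≤ 1)
    (hsmall : 400 * (harmonic L * Real.exp (-2 * β)) * (L ^ 3 * √L) ≤ 1)
    {f : Defects L → ℝ} (hf : ∀ D ∉ excited L, f D = 0) :
    ∑ D, wt β D * count D * f D ^ 2
      ≤ 800 * harmonic L * (L ^ 3 * √L) * Real.exp (2 * β) * (defectChain β).dirichlet f f := by
  have hone := one_le_size (L := L)
  have hL' : (L : ℝ) * Real.exp (-2 * β) ≤ 1 :=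
    (mul_le_mul_of_nonneg_right (le_self_pow₀ hone two_ne_zero) (Real.exp_pos _).le).trans hL
  have hincr := sum_rate_mul_sub_target_sq_le hβ hL' f
  have htarget := sum_rate_mul_target_sq_le hL (hf 0 fun h => h.2 rfl)
  have hsum : (∑ D, wt β D * count D * f D ^ 2) / (100 * (L ^ 3 * √L))
      ≤ 2 * (∑ D with IsEven D, ∑ d ∈ ones D, wt β D * rate D d * (f (target D d) - f D) ^ 2)
        + 2 * ∑ D with IsEven D, ∑ d ∈ ones D, wt β D * rate D d * f (target D d) ^ 2 := by
    rw [sum_wt_mul_count_mul_sq_eq β hf, Finset.sum_div, Finset.mul_sum, Finset.mul_sum,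
      ← Finset.sum_add_distrib]
    exact Finset.sum_le_sum fun D _ => wt_mul_count_mul_sq_div_le β f D
  have hA : 0 ≤ ∑ D, wt β D * count D * f D ^ 2 := Finset.sum_nonneg fun D _ =>
    mul_nonneg (mul_nonneg (wt_pos β D).le (count_nonneg D)) (sq_nonneg _)
  set A := ∑ D, wt β D * count D * f D ^ 2
  have habsorb := mul_le_mul_of_nonneg_right hsmall hA
  rw [div_le_iff₀ (by positivity)] at hsum
  have hbound := hsum.trans (mul_le_mul_of_nonneg_right
    (add_le_add (mul_le_mul_of_nonneg_left hincr two_pos.le)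
      (mul_le_mul_of_nonneg_left htarget two_pos.le)) (by positivity))
  linarith

lemma sum_wt_mul_count_le {β : ℝ} (hL : (L : ℝ) ^ 2 ≤ Real.exp β) :
    ∑ D : Defects L, wt β D * count D ≤ Real.exp (Real.exp 1) := by
  have hterm : ∀ D : Defects L, wt β D * count D ≤ ∏ p, Real.exp ((1 - β) * ind (D p)) := fun D =>
    calc wt β D * count D ≤ wt β D * Real.exp (count D) :=
          mul_le_mul_of_nonneg_left (by linarith [Real.add_one_le_exp (count D)]) (wt_pos _ _).le
      _ = Real.exp ((1 - β) * count D) := by rw [wt, ← Real.exp_add]; ring_nf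
      _ = ∏ p, Real.exp ((1 - β) * ind (D p)) := by rw [← Real.exp_sum, ← Finset.mul_sum, count]
  have hsite : ∑ a : ZMod 2, Real.exp ((1 - β) * ind a) = Real.exp (1 - β) + 1 := by
    rw [show (Finset.univ : Finset (ZMod 2)) = {1, 0} from by decide,
      Finset.sum_pair (by decide), ind_one, ind_zero, mul_one, mul_zero, Real.exp_zero]
  calc ∑ D : Defects L, wt β D * count D
      ≤ ∑ D : Defects L, ∏ p, Real.exp ((1 - β) * ind (D p)) :=
        Finset.sum_le_sum fun D _ => hterm D
    _ = ∏ _p : ZMod L × ZMod L, ∑ a : ZMod 2, Real.exp ((1 - β) * ind a) := by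
        rw [Finset.prod_univ_sum, Fintype.piFinset_univ]
    _ = (Real.exp (1 - β) + 1) ^ (L ^ 2) := by
        rw [hsite, Finset.prod_const, Finset.card_univ, Fintype.card_prod, ZMod.card, sq]
    _ ≤ Real.exp (Real.exp (1 - β)) ^ (L ^ 2) :=
        pow_le_pow_left₀ (by positivity) (Real.add_one_le_exp _) _
    _ = Real.exp (L ^ 2 * Real.exp (1 - β)) := by rw [← Real.exp_nat_mul, Nat.cast_pow]
    _ ≤ Real.exp (Real.exp β * Real.exp (1 - β)) := by gcongr
    _ = Real.exp (Real.exp 1) := by rw [← Real.exp_add, add_sub_cancel]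

section Length

variable {β : ℝ} (hL : (L : ℝ) ≤ Real.exp (β / 2))

include hL

omit [NeZero L] in
lemma size_sq_le_exp : (L : ℝ) ^ 2 ≤ Real.exp β :=
  calc (L : ℝ) ^ 2 ≤ Real.exp (β / 2) ^ 2 := by gcongr
    _ = Real.exp β := by rw [Real.exp_half, Real.sq_sqrt (Real.exp_pos β).le]

omit [NeZero L] in
lemma size_sq_mul_exp_le_one (hβ : 0 ≤ β) : (L : ℝ) ^ 2 * Real.exp (-2 * β) ≤ 1 :=
  calc (L : ℝ) ^ 2 * Real.exp (-2 * β) ≤ Real.exp β * Real.exp (-2 * β) := by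
        gcongr
        exact size_sq_le_exp hL
    _ ≤ 1 := by
        rw [← Real.exp_add, Real.exp_le_one_iff]
        linarith

lemma harmonic_size_le (hβ : 2 ≤ β) : (harmonic L : ℝ) ≤ β := by
  have hlog : Real.log L ≤ β / 2 :=
    (Real.log_le_iff_le_exp (one_pos.trans_le one_le_size)).2 hL
  linarith [harmonic_le_one_add_log L]

omit [NeZero L] in
lemma size_pow_mul_sqrt_le_exp : (L : ℝ) ^ 3 * √L ≤ Real.exp (1.75 * β) :=
  calc (L : ℝ) ^ 3 * √L ≤ Real.exp (β / 2) ^ 3 * √(Real.exp (β / 2)) := by gcongr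
    _ = Real.exp (1.75 * β) := by
        rw [← Real.exp_half, ← Real.exp_nat_mul, ← Real.exp_add]
        congr 1
        push_cast
        ring

lemma harmonic_mul_size_pow_le_one (hβ : 12800 ≤ β) :
    400 * (harmonic L * Real.exp (-2 * β)) * (L ^ 3 * √L) ≤ 1 := by
  have hexp : 400 * β ≤ Real.exp (β / 4) := by
    nlinarith [Real.quadratic_le_exp_of_nonneg (x := β / 4) (by linarith)]
  calc 400 * (harmonic L * Real.exp (-2 * β)) * (L ^ 3 * √L)
      ≤ 400 * (β * Real.exp (-2 * β)) * Real.exp (1.75 * β) := by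
        gcongr
        · exact harmonic_size_le hL (by linarith)
        · exact size_pow_mul_sqrt_le_exp hL
    _ = 400 * β * Real.exp (-(β / 4)) := by
        rw [mul_assoc, mul_assoc β, ← Real.exp_add, ← mul_assoc]
        ring_nf
    _ ≤ Real.exp (β / 4) * Real.exp (-(β / 4)) :=
        mul_le_mul_of_nonneg_right hexp (Real.exp_pos _).le
    _ = 1 := by rw [← Real.exp_add, add_neg_cancel, Real.exp_zero]

end Length

/-! ### A Lyapunov function for the defects -/

/-- Twice the constant in the Poincaré inequality of the defects weighted by their number. The
integral of `count / timeScale` up to the hitting time of `0` has an exponential moment. -/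
def timeScale (L : ℕ) (β : ℝ) : ℝ := 1600 * β * (L ^ 3 * √L) * Real.exp (2 * β)

lemma timeScale_pos {β : ℝ} (hβ : 0 < β) : 0 < timeScale L β := by
  have := one_le_size (L := L)
  unfold timeScale
  positivity

lemma weightedPoincare_defectChain {β : ℝ} (hβ : 12800 ≤ β) (hL : (L : ℝ) ≤ Real.exp (β / 2)) :
    (defectChain β).WeightedPoincare (excited L) (fun D => count D / timeScale L β) (1 / 2) := by
  intro f hf
  have hT := timeScale_pos (L := L) (by linarith : 0 < β)
  have hE := (defectChain β).dirichlet_nonneg f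
  calc ∑ D, wt β D * (count D / timeScale L β) * f D ^ 2
      = (∑ D, wt β D * count D * f D ^ 2) / timeScale L β := by
        rw [Finset.sum_div]
        exact Finset.sum_congr rfl fun D _ => by ring
    _ ≤ (800 * β * (L ^ 3 * √L) * Real.exp (2 * β) * (defectChain β).dirichlet f f)
          / timeScale L β := by
        refine div_le_div_of_nonneg_right ?_ hT.le
        refine (sum_wt_mul_count_mul_sq_le (by linarith) (size_sq_mul_exp_le_one hL (by linarith))
          (harmonic_mul_size_pow_le_one hL hβ) hf).trans ?_
        gcongr
        exact harmonic_size_le hL (by linarith)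
    _ = 1 / 2 * (timeScale L β * (defectChain β).dirichlet f f) / timeScale L β := by
        rw [timeScale]
        ring
    _ = 1 / 2 * (defectChain β).dirichlet f f := by field_simp

section Lyapunov

variable {β : ℝ} {g : Defects L → ℝ} {D : Defects L}

lemma wt_mul_isExpMoment_sq_le (hβ : 12800 ≤ β) (hL : (L : ℝ) ≤ Real.exp (β / 2))
    (hg : (defectChain β).IsExpMoment (excited L) (fun D => count D / timeScale L β) g)
    (hD : D ≠ 0) : wt β D * g D ^ 2 ≤ Real.exp 3 := by
  have hT := timeScale_pos (L := L) (by linarith : 0 < β)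
  have hsum : (∑ D, wt β D * (count D / timeScale L β) * g D ^ 2)
      ≤ ∑ D, wt β D * (count D / timeScale L β) :=
    (weightedPoincare_defectChain hβ hL).sum_isExpMoment_sq_le
      (fun D => div_nonneg (count_nonneg D) hT.le) hg
  simp only [← mul_div_assoc, div_mul_eq_mul_div, ← Finset.sum_div,
    div_le_div_iff_of_pos_right hT] at hsum
  calc wt β D * g D ^ 2 ≤ wt β D * count D * g D ^ 2 :=
        mul_le_mul_of_nonneg_right
          (le_mul_of_one_le_right (wt_pos β D).le (one_le_count hD)) (sq_nonneg _)
    _ ≤ ∑ D, wt β D * count D * g D ^ 2 :=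
        Finset.single_le_sum (f := fun D => wt β D * count D * g D ^ 2)
          (fun D _ => mul_nonneg (mul_nonneg (wt_pos β D).le (count_nonneg D)) (sq_nonneg _))
          (Finset.mem_univ D)
    _ ≤ ∑ D : Defects L, wt β D * count D := hsum
    _ ≤ Real.exp (Real.exp 1) := sum_wt_mul_count_le (size_sq_le_exp hL)
    _ ≤ Real.exp 3 := Real.exp_le_exp.2 Real.exp_one_lt_three.le

lemma log_one_add_le_of_wt_mul_sq_le (hβ : 5 ≤ β) (hD : D ≠ 0) {a : ℝ} (ha : 0 ≤ a)
    (hwt : wt β D * a ^ 2 ≤ Real.exp 3) : Real.log (1 + a) ≤ β * count D := by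
  have hn : 5 ≤ β * count D := by nlinarith [one_le_count hD]
  have hsq : a ^ 2 ≤ Real.exp ((3 + β * count D) / 2) ^ 2 :=
    calc a ^ 2 = wt β D * a ^ 2 * Real.exp (β * count D) := by
          rw [wt, mul_right_comm, ← Real.exp_add, neg_mul, neg_add_cancel, Real.exp_zero, one_mul]
      _ ≤ Real.exp 3 * Real.exp (β * count D) :=
          mul_le_mul_of_nonneg_right hwt (Real.exp_pos _).le
      _ = Real.exp ((3 + β * count D) / 2) ^ 2 := by
          rw [← Real.exp_add, Real.exp_half, Real.sq_sqrt (Real.exp_pos _).le]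
  have hle := (sq_le_sq₀ ha (Real.exp_pos _).le).1 hsq
  rw [Real.log_le_iff_le_exp (by linarith)]
  calc 1 + a ≤ 2 * Real.exp ((3 + β * count D) / 2) := by
        linarith [Real.one_le_exp (by linarith : 0 ≤ (3 + β * count D) / 2)]
    _ ≤ Real.exp 1 * Real.exp ((3 + β * count D) / 2) :=
        mul_le_mul_of_nonneg_right (by linarith [Real.add_one_le_exp 1]) (Real.exp_pos _).le
    _ ≤ Real.exp (β * count D) := by
        rw [← Real.exp_add, Real.exp_le_exp]
        linarith

lemma log_one_add_le_two_mul (hβ : 0 ≤ β) {a : ℝ} (ha : 0 ≤ a) (h : a ≤ β * Real.exp β) :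
    Real.log (1 + a) ≤ 2 * β := by
  rw [Real.log_le_iff_le_exp (by linarith)]
  calc 1 + a ≤ (β + 1) * Real.exp β := by linarith [Real.one_le_exp hβ]
    _ ≤ Real.exp β * Real.exp β :=
        mul_le_mul_of_nonneg_right (Real.add_one_le_exp β) (Real.exp_pos _).le
    _ = Real.exp (2 * β) := by rw [← Real.exp_add, two_mul]

lemma gen_mul_log_log_lt (hβ : 1 < β) (hg0 : ∀ D, 0 ≤ g D)
    (hg : (defectChain β).IsExpMoment (excited L) (fun D => count D / timeScale L β) g)
    (hD : D ∈ excited L) (hlog : Real.log (1 + g D) ≤ β * count D) :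
    (defectChain β).gen
        ((2 * timeScale L β * β) • fun D => Real.log (1 + Real.log (1 + g D))) D < -1 := by
  have hpos : 0 < 1 + Real.log (1 + g D) := by
    linarith [Real.log_nonneg (by linarith [hg0 D] : 1 ≤ 1 + g D)]
  have hT := timeScale_pos (L := L) (one_pos.trans hβ)
  have hn := one_le_count hD.2
  rw [map_smul, Pi.smul_apply, smul_eq_mul]
  calc 2 * timeScale L β * β * (defectChain β).gen (fun D => Real.log (1 + Real.log (1 + g D))) D
      ≤ 2 * timeScale L β * β * -(count D / timeScale L β / (1 + Real.log (1 + g D))) :=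
        mul_le_mul_of_nonneg_left (hg.gen_log_log_le hg0 hD) (by positivity)
    _ = -(2 * β * count D / (1 + Real.log (1 + g D))) := by field_simp
    _ < -1 := by
        rw [neg_lt_neg_iff, one_lt_div hpos]
        nlinarith

lemma exists_lyapunov (hβ : 12800 ≤ β) (hL : (L : ℝ) ≤ Real.exp (β / 2)) :
    ∃ V : Defects L → ℝ, (∀ D, 0 ≤ V D) ∧ (∀ D ∈ excited L, (defectChain β).gen V D < -1) ∧
      ∀ D, V D ≤ 4 * β ^ 2 * timeScale L β := by
  have hT := timeScale_pos (L := L) (by linarith : 0 < β)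
  have hP := weightedPoincare_defectChain hβ hL
  have hu : ∀ D ∈ excited L, 0 < count D / timeScale L β := fun D hD =>
    div_pos (one_pos.trans_le (one_le_count hD.2)) hT
  obtain ⟨g, hg⟩ := hP.exists_isExpMoment one_half_lt_one hu
  have hg0 := hP.isExpMoment_nonneg one_half_lt_one hu hg
  have hlog0 : ∀ D, 0 ≤ Real.log (1 + g D) := fun D => Real.log_nonneg (by linarith [hg0 D])
  have hlog : ∀ D ∈ excited L, Real.log (1 + g D) ≤ β * count D := fun D hD =>
    log_one_add_le_of_wt_mul_sq_le (by linarith) hD.2 (hg0 D)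
      (wt_mul_isExpMoment_sq_le hβ hL hg hD.2)
  have hlog' : ∀ D, Real.log (1 + g D) ≤ β * Real.exp β := fun D => by
    by_cases hD : D ∈ excited L
    · refine (hlog D hD).trans (mul_le_mul_of_nonneg_left ?_ (by linarith))
      exact (count_le_size_sq D).trans (size_sq_le_exp hL)
    · rw [hg.eq_zero D hD, add_zero, Real.log_one]
      exact mul_nonneg (by linarith) (Real.exp_pos _).le
  refine ⟨(2 * timeScale L β * β) • fun D => Real.log (1 + Real.log (1 + g D)), fun D => ?_,
    fun D hD => gen_mul_log_log_lt (by linarith) hg0 hg hD (hlog D hD), fun D => ?_⟩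
  · exact mul_nonneg (by positivity) (Real.log_nonneg (by linarith [hlog0 D]))
  · calc 2 * timeScale L β * β * Real.log (1 + Real.log (1 + g D))
        ≤ 2 * timeScale L β * β * (2 * β) := by
          gcongr
          exact log_one_add_le_two_mul (by linarith) (hlog0 D) (hlog' D)
      _ = 4 * β ^ 2 * timeScale L β := by ring

end Lyapunov

/-! ### From spin configurations to defects -/

/-- The identification of `Fin L` with `ℤ/L`. -/
def cyc : Fin L ≃ ZMod L where
  toFun i := (i.val : ZMod L)
  invFun x := ⟨x.val, ZMod.val_lt x⟩
  left_inv i := Fin.ext (ZMod.val_cast_of_lt i.isLt)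
  right_inv x := ZMod.natCast_zmod_val x

lemma cyc_fsucc (i : Fin L) : cyc (fsucc i) = cyc i + 1 := by
  change (((i.val + 1) % L : ℕ) : ZMod L) = (i.val : ZMod L) + 1
  rw [ZMod.natCast_mod, Nat.cast_succ]

/-- The identification of the sites with `(ℤ/L)²`. -/
def site : Fin L × Fin L ≃ ZMod L × ZMod L := cyc.prodCongr cyc

/-- The spins of a configuration as a field on `(ℤ/L)²` with values in `ℤ/2`; `1` codes spin
`-1`. -/
def spin (σ : ConfigP L) (p : ZMod L × ZMod L) : ZMod 2 := if σ (site.symm p) then 0 else 1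

/-- The sums over the plaquettes of a field with values in `ℤ/2`. -/
def plaq (s : ZMod L × ZMod L → ZMod 2) : Defects L := fun p =>
  s p + s (p.1 + 1, p.2) + s (p.1, p.2 + 1) + s (p.1 + 1, p.2 + 1)

/-- The defects of a configuration: the plaquettes with `p_x = -1`. -/
def defects (σ : ConfigP L) : Defects L := plaq (spin σ)

lemma sval_eq (σ : ConfigP L) (x : Fin L × Fin L) :
    sval (σ x) = 1 - 2 * ind (spin σ (site x)) := by
  rw [spin, Equiv.symm_apply_apply, sval]
  cases σ x
  · rw [if_neg Bool.false_ne_true, if_neg Bool.false_ne_true, ind_one]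
    norm_num
  · rw [if_pos rfl, if_pos rfl, ind_zero, mul_zero, sub_zero]

lemma one_sub_two_mul_ind_mul (a b : ZMod 2) :
    (1 - 2 * ind a) * (1 - 2 * ind b) = 1 - 2 * ind (a + b) := by
  rcases eq_one_or_eq_zero b with rfl | rfl
  · rw [ind_add_one, ind_one]
    ring
  · rw [add_zero, ind_zero]
    ring

lemma plaqP_eq (σ : ConfigP L) (x : Fin L × Fin L) :
    plaqP L σ x = 1 - 2 * ind (defects σ (site x)) := by
  have hsite : ∀ i j : Fin L, site (i, j) = (cyc i, cyc j) := fun _ _ => rfl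
  simp only [plaqP, sval_eq, one_sub_two_mul_ind_mul, hsite, cyc_fsucc]
  rfl

lemma hamP_eq (σ : ConfigP L) : hamP L σ = count (defects σ) - (L : ℝ) ^ 2 / 2 := by
  simp only [hamP, plaqP_eq, Finset.sum_sub_distrib, ← Finset.mul_sum]
  rw [Equiv.sum_comp site fun p => ind (defects σ p), ← count]
  simp only [Finset.sum_const, Finset.card_univ, Fintype.card_prod, Fintype.card_fin, nsmul_eq_mul]
  push_cast
  ring

lemma spin_flipP (σ : ConfigP L) (x : Fin L × Fin L) :
    spin (flipP L σ x) = spin σ + pt (site x) := by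
  funext p
  rw [Pi.add_apply, spin, spin, flipP]
  by_cases hp : p = site x
  · rw [hp, show pt (site x) (site x) = 1 from Pi.single_eq_same _ _, Equiv.symm_apply_apply,
      if_pos rfl]
    cases σ x <;> decide
  · rw [pt_apply_of_ne hp, add_zero, if_neg (mt (Equiv.symm_apply_eq site).1 hp)]

omit [NeZero L] in
lemma plaq_add (s t : ZMod L × ZMod L → ZMod 2) : plaq (s + t) = plaq s + plaq t := by
  funext p
  simp only [plaq, Pi.add_apply]
  ring

omit [NeZero L] in
lemma plaq_pt (y : ZMod L × ZMod L) : plaq (pt y) = rect (y - (1, 1)) y := by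
  have hshift : ∀ a b : ZMod L, ∀ p : ZMod L × ZMod L,
      pt y (p.1 + a, p.2 + b) = pt (y.1 - a, y.2 - b) p := fun a b p => by
    simp only [Pi.single_apply, Prod.ext_iff, eq_sub_iff_add_eq]
  funext p
  have h10 := hshift 1 0 p
  have h01 := hshift 0 1 p
  simp only [add_zero, sub_zero] at h10 h01
  rw [plaq, h10, h01, hshift 1 1 p, rect]
  change pt y p + pt (y.1 - 1, y.2) p + pt (y.1, y.2 - 1) p + pt (y.1 - 1, y.2 - 1) p
    = pt (y.1 - 1, y.2 - 1) p + pt (y.1 - 1, y.2) p + pt (y.1, y.2 - 1) p + pt y p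
  ring

lemma defects_flipP (σ : ConfigP L) (x : Fin L × Fin L) :
    defects (flipP L σ x) = toggle (site x - (1, 1)) (defects σ) := by
  rw [defects, spin_flipP, plaq_add, plaq_pt, toggle, defects, Prod.fst_sub, Prod.snd_sub,
    sub_add_cancel, sub_add_cancel]

lemma isEven_plaq (s : ZMod L × ZMod L → ZMod 2) : IsEven (plaq s) := by
  have hsum : ∀ a : ZMod L → ZMod 2, ∑ c, a (c + 1) = ∑ c, a c := Equiv.sum_comp (Equiv.addRight 1)
  refine ⟨fun r => ?_, fun c => ?_⟩ <;> simp only [plaq, Finset.sum_add_distrib]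
  · rw [hsum fun c => s (r, c), hsum fun c => s (r + 1, c)]
    linear_combination (∑ c, s (r, c) + ∑ c, s (r + 1, c)) * CharTwo.two_eq_zero (R := ZMod 2)
  · rw [hsum fun r => s (r, c), hsum fun r => s (r, c + 1)]
    linear_combination (∑ r, s (r, c) + ∑ r, s (r, c + 1)) * CharTwo.two_eq_zero (R := ZMod 2)

lemma defects_mem_excited {σ : ConfigP L} (hσ : σ ∉ GroundP L) : defects σ ∈ excited L := by
  refine ⟨isEven_plaq _, fun hzero => hσ fun η => ?_⟩
  rw [hamP_eq, hamP_eq, hzero, count_zero]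
  exact sub_le_sub_right (count_nonneg _) _

section SpinChain

omit [NeZero L]

lemma flipP_flipP (x : Fin L × Fin L) (σ : ConfigP L) : flipP L (flipP L σ x) x = σ := by
  funext i
  unfold flipP
  split_ifs <;> simp

/-- The Metropolis dynamics of the spins. -/
def spinChain (L : ℕ) (β : ℝ) : ReversibleChain (ConfigP L) (Fin L × Fin L) :=
  ReversibleChain.metropolis (fun x σ => flipP L σ x) flipP_flipP
    (fun σ => Real.exp (-β * hamP L σ)) fun _ => Real.exp_pos _

lemma rate_spinChain (β : ℝ) (x : Fin L × Fin L) (σ : ConfigP L) :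
    (spinChain L β).cond x σ / (spinChain L β).weight σ = metroRateP L β σ (flipP L σ x) := by
  refine (ReversibleChain.metropolis_rate _ _ _ _ _ _).trans ?_
  rw [metroRateP, ← Real.exp_sub, mul_sub]

lemma flipP_ne (σ : ConfigP L) (x : Fin L × Fin L) : flipP L σ x ≠ σ := fun h => by
  simpa [flipP] using congrFun h x

lemma mulVec_genP (β : ℝ) (h : ConfigP L → ℝ) (σ : ConfigP L) :
    (genP L β).mulVec h σ = (spinChain L β).gen h σ := by
  have hentry : ∀ η, genP L β σ η * h η = ∑ x, metroRateP L β σ (flipP L σ x) *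
      ((if η = flipP L σ x then h η else 0) - if η = σ then h η else 0) := by
    intro η
    rw [genP]
    by_cases hη : η = σ
    · simp [hη, (flipP_ne σ _).symm, Finset.sum_mul]
    · rw [if_neg hη, Finset.sum_mul]
      refine Finset.sum_congr rfl fun x _ => ?_
      rw [if_neg hη, sub_zero, ite_mul, zero_mul, mul_ite, mul_zero]
  rw [Matrix.mulVec, dotProduct, Finset.sum_congr rfl fun η _ => hentry η, Finset.sum_comm,
    ReversibleChain.gen_apply]
  refine Finset.sum_congr rfl fun x _ => ?_
  rw [← Finset.mul_sum, Finset.sum_sub_distrib, Finset.sum_ite_eq', Finset.sum_ite_eq',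
    if_pos (Finset.mem_univ _), if_pos (Finset.mem_univ _), rate_spinChain]
  rfl

end SpinChain

lemma gen_spinChain_comp_defects (β : ℝ) (V : Defects L → ℝ) (σ : ConfigP L) :
    (spinChain L β).gen (fun τ => V (defects τ)) σ = (defectChain β).gen V (defects σ) := by
  refine (spinChain L β).gen_comp_of_semiconj (site.trans (Equiv.subRight (1, 1)))
    (fun x τ => defects_flipP τ x) (fun x τ => ?_) V σ
  rw [rate_spinChain, metroRateP, hamP_eq, hamP_eq, defects_flipP, sub_sub_sub_cancel_right]
  refine .trans ?_ (ReversibleChain.metropolis_rate _ _ _ _ _ _).symm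
  rw [wt, wt, ← Real.exp_sub, mul_sub]
  rfl

lemma le_lyapunov {β : ℝ} {h : ConfigP L → ℝ} (hground : ∀ σ ∈ GroundP L, h σ = 0)
    (hgen : ∀ σ ∉ GroundP L, (genP L β).mulVec h σ = -1) {V : Defects L → ℝ}
    (hV : ∀ D, 0 ≤ V D) (hVgen : ∀ D ∈ excited L, (defectChain β).gen V D < -1)
    (σ : ConfigP L) : h σ ≤ V (defects σ) := by
  refine sub_nonpos.1 ((spinChain L β).nonpos_of_gen_pos (B := (GroundP L)ᶜ)
    (f := h - fun τ => V (defects τ)) (fun τ hτ => ?_) (fun τ hτ => ?_) σ)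
  · rw [Pi.sub_apply, hground τ (not_not.1 hτ), zero_sub]
    exact neg_nonpos.2 (hV _)
  · rw [map_sub, Pi.sub_apply, ← mulVec_genP, hgen τ hτ, gen_spinChain_comp_defects, sub_pos]
    exact hVgen _ (defects_mem_excited hτ)

end Plaquette

open Plaquette in
theorem expected_hitting_time_ground_general {L : ℕ} [NeZero L] {β : ℝ} (hβ : 12800 ≤ β)
    (hL : (L : ℝ) ≤ Real.exp (β / 2)) {h : ConfigP L → ℝ} (hground : ∀ σ ∈ GroundP L, h σ = 0)
    (hgen : ∀ σ ∉ GroundP L, (genP L β).mulVec h σ = -1) (σ : ConfigP L) :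
    h σ ≤ 6400 * β ^ 3 * (L ^ 3 * √L) * Real.exp (2 * β) := by
  obtain ⟨V, hV, hVgen, hVle⟩ := exists_lyapunov hβ hL
  calc h σ ≤ V (defects σ) := le_lyapunov hground hgen hV hVgen σ
    _ ≤ 4 * β ^ 2 * timeScale L β := hVle _
    _ = 6400 * β ^ 3 * (L ^ 3 * √L) * Real.exp (2 * β) := by
        rw [timeScale]
        ring

/-- Lemma `LemmaHittingGround`, expected hitting time of the ground states:
at the critical length, the vector `h` of expected hitting times of `𝒢` (the unique function
with `h ≡ 0` on `𝒢` and `𝓛h ≡ -1` off `𝒢`) satisfies `max_σ h(σ) ≤ C β⁹ e^{3.75β}`. -/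
theorem expected_hitting_time_ground :
    ∃ C β₀ : ℝ, 0 < C ∧ ∀ β : ℝ, β₀ ≤ β →
      ∀ h : ConfigP (Lc β) → ℝ,
        (∀ σ ∈ GroundP (Lc β), h σ = 0) →
        (∀ σ : ConfigP (Lc β), σ ∉ GroundP (Lc β) → (genP (Lc β) β).mulVec h σ = -1) →
        ∀ σ : ConfigP (Lc β), h σ ≤ C * β ^ 9 * Real.exp (3.75 * β) := by
  refine ⟨6400, 12800, by norm_num, fun β hβ h hground hgen σ => ?_⟩
  have : NeZero (Lc β) := ⟨(Nat.floor_pos.2 (Real.one_le_exp (by linarith))).ne'⟩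
  have hL : (Lc β : ℝ) ≤ Real.exp (β / 2) := Nat.floor_le (Real.exp_pos _).le
  have hβ9 : β ^ 3 ≤ β ^ 9 := pow_le_pow_right₀ (by linarith) (by norm_num)
  calc h σ ≤ 6400 * β ^ 3 * (Lc β ^ 3 * √(Lc β)) * Real.exp (2 * β) :=
        expected_hitting_time_ground_general hβ hL hground hgen σ
    _ ≤ 6400 * β ^ 9 * Real.exp (1.75 * β) * Real.exp (2 * β) := by
        gcongr
        exact Plaquette.size_pow_mul_sqrt_le_exp hL
    _ = 6400 * β ^ 9 * Real.exp (3.75 * β) := by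
        rw [mul_assoc, ← Real.exp_add]
        ring_nf

end
end

section
/- Staying in the ground states: for the periodic SPM at L=L_c=⌊e^{β/2}⌋ and β sufficiently large, for every time t∈[e^{3.5β}, β²e^{4β}], sup_{σ∈𝒢} ℙ_σ[X_t∉𝒢] = sup_{σ∈𝒢} (e^{t𝓛}𝟙_{𝒢^c})(σ) ≤ C·L^{-1/2} for some constant C. -/
/-!
The Glauber dynamics is reversible with respect to the Boltzmann weight `w(σ) = e^{-βH(σ)}`, so at
any time `t ≥ 0` the total weight flowing from the ground states `𝒢` into `𝒢ᶜ` is at most `w(𝒢ᶜ)`.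
Spin configurations form a group under pointwise multiplication, and multiplication by a ground
state preserves `H`; these symmetries act transitively on `𝒢`, so the probability of being excited
at time `t` is the same from every ground state, and hence is at most `w(𝒢ᶜ) / w(𝒢)`.

This ratio is bounded by counting defects. The plaquette map is a homomorphism whose kernel is `𝒢`,
so each of its fibres has at most `|𝒢|` elements, and in its image every row has an even number of
defects. With `q = e^{-β}`, a row with an even number of defects has generating function
`((1 + q)^L + (1 - q)^L) / 2 ≤ cosh (L q) ≤ exp (L² q² / 2)`. Thus
`w(𝒢ᶜ) / w(𝒢) ≤ exp (L³ q² / 2) - 1`, which is at most `1 / L` since `L⁴ q² ≤ 1` for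
`L ≤ e^{β/2}`.
-/

open scoped BigOperators

attribute [local instance] Classical.propDecidable

noncomputable section

open SPMP

namespace SPMP

open Finset Matrix
open scoped symmDiff Nat

section MatrixExponential

variable {m n : Type*} [Fintype m] [DecidableEq m] [Fintype n] [DecidableEq n]

open scoped Matrix.Norms.Operator in
theorem mexp_eq_exp (A : Matrix n n ℝ) : mexp A = NormedSpace.exp A := by
  have hsum : HasSum (fun k : ℕ => (k ! : ℝ)⁻¹ • A ^ k) (NormedSpace.exp A) :=
    NormedSpace.exp_series_hasSum_exp' A
  ext i j
  simp only [mexp, div_eq_inv_mul]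
  exact (Pi.hasSum.1 (Pi.hasSum.1 hsum i) j).tsum_eq

open scoped Matrix.Norms.Operator in
theorem hasSum_mexp (A : Matrix n n ℝ) : HasSum (fun k : ℕ => (k ! : ℝ)⁻¹ • A ^ k) (mexp A) := by
  rw [mexp_eq_exp]
  exact NormedSpace.exp_series_hasSum_exp' A

theorem mexp_zero : mexp (0 : Matrix n n ℝ) = 1 := by
  rw [mexp_eq_exp, NormedSpace.exp_zero]

theorem mexp_mul_eq_mul_mexp {A : Matrix m m ℝ} {B : Matrix m n ℝ} {C : Matrix n n ℝ}
    (h : A * B = B * C) : mexp A * B = B * mexp C := by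
  have hpow (k : ℕ) : A ^ k * B = B * C ^ k := by
    induction k with
    | zero => simp
    | succ k ih => rw [pow_succ, pow_succ, Matrix.mul_assoc, h, ← Matrix.mul_assoc, ih,
        Matrix.mul_assoc]
  have hleft := (hasSum_mexp A).map (addMonoidHomMulRight B)
    (continuous_id.matrix_mul continuous_const)
  have hright := (hasSum_mexp C).map (addMonoidHomMulLeft B)
    (continuous_const.matrix_mul continuous_id)
  refine hleft.unique (hright.congr_fun fun k => ?_)
  simp [hpow]

theorem mexp_mulVec_of_mulVec_eq_zero {A : Matrix n n ℝ} {v : n → ℝ} (h : A *ᵥ v = 0) :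
    mexp A *ᵥ v = v := by
  have hcol : A * replicateCol Unit v = replicateCol Unit v * (0 : Matrix Unit Unit ℝ) := by
    rw [← replicateCol_mulVec, h, replicateCol_zero, Matrix.mul_zero]
  have hexp := mexp_mul_eq_mul_mexp hcol
  rwa [mexp_zero, Matrix.mul_one, ← replicateCol_mulVec, replicateCol_inj] at hexp

theorem mexp_transpose (A : Matrix n n ℝ) : mexp Aᵀ = (mexp A)ᵀ := by
  rw [mexp_eq_exp, mexp_eq_exp, exp_transpose]

theorem mexp_submatrix_equiv (A : Matrix n n ℝ) (e : m ≃ n) :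
    mexp (A.submatrix e e) = (mexp A).submatrix e e := by
  have hpow (k : ℕ) : A.submatrix e e ^ k = (A ^ k).submatrix e e :=
    (map_pow (reindexAlgEquiv ℝ ℝ e.symm) A k).symm
  ext i j
  simp only [mexp, hpow, submatrix_apply]

theorem mexp_mulVec_comp_equiv {A : Matrix n n ℝ} {v : n → ℝ} (e : n ≃ n)
    (hA : A.submatrix e e = A) (hv : v ∘ e = v) : (mexp A *ᵥ v) ∘ e = mexp A *ᵥ v := by
  have h := submatrix_mulVec_equiv (mexp A) v e e
  rwa [← mexp_submatrix_equiv, hA, (e.comp_symm_eq v v).2 hv.symm, eq_comm] at h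

theorem mexp_add_smul_one (A : Matrix n n ℝ) (c : ℝ) :
    mexp (A + c • 1) = Real.exp c • mexp A := by
  have hscalar : NormedSpace.exp (c • (1 : Matrix n n ℝ)) = Real.exp c • 1 := by
    rw [smul_one_eq_diagonal, exp_diagonal, smul_one_eq_diagonal, Real.exp_eq_exp_ℝ]
    congr 1
    ext i
    exact Pi.coe_exp _ _
  rw [mexp_eq_exp, mexp_eq_exp, exp_add_of_commute _ _ ((Commute.one_right A).smul_right c),
    hscalar, mul_smul_comm, mul_one]

theorem mexp_nonneg_of_nonneg {A : Matrix n n ℝ} (hA : ∀ i j, 0 ≤ A i j) (i j : n) :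
    0 ≤ mexp A i j :=
  tsum_nonneg fun k => div_nonneg (pow_apply_nonneg hA k i j) (Nat.cast_nonneg _)

theorem mexp_nonneg {A : Matrix n n ℝ} (hA : ∀ i j, i ≠ j → 0 ≤ A i j) (i j : n) :
    0 ≤ mexp A i j := by
  obtain ⟨c, hc⟩ : ∃ c, ∀ i, -c ≤ A i i := by
    obtain ⟨c, hc⟩ := (Set.finite_range fun i => A i i).bddBelow
    exact ⟨-c, fun i => (neg_neg c).trans_le (hc ⟨i, rfl⟩)⟩
  have hshift (i j : n) : 0 ≤ (A + c • 1) i j := by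
    rcases eq_or_ne i j with rfl | hij
    · simpa using neg_le_iff_add_nonneg.1 (hc i)
    · simpa [one_apply_ne hij] using hA i j hij
  have h := mexp_nonneg_of_nonneg hshift i j
  rw [mexp_add_smul_one] at h
  exact nonneg_of_mul_nonneg_right h (Real.exp_pos c)

end MatrixExponential

section MarkovChain

variable {n : Type*}

/-- Detailed balance of the transition probabilities or rates `A` with respect to the weight `w`,
which need not be normalized. -/
def IsReversible (w : n → ℝ) (A : Matrix n n ℝ) : Prop :=
  ∀ i j, w i * A i j = w j * A j i

theorem IsReversible.smul {w : n → ℝ} {A : Matrix n n ℝ} (hA : IsReversible w A) (t : ℝ) :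
    IsReversible w (t • A) := fun i j => by
  rw [Matrix.smul_apply, Matrix.smul_apply, mul_smul_comm, mul_smul_comm, hA]

variable [Fintype n]

/-- `A` is the generator of a continuous-time Markov chain: `A i j` is the rate of the jump from
`i` to `j` for `i ≠ j`, and the diagonal makes every row sum to zero. -/
def IsGenerator (A : Matrix n n ℝ) : Prop :=
  (∀ i j, i ≠ j → 0 ≤ A i j) ∧ A *ᵥ 1 = 0

theorem IsGenerator.smul {A : Matrix n n ℝ} (hA : IsGenerator A) {t : ℝ} (ht : 0 ≤ t) :
    IsGenerator (t • A) :=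
  ⟨fun i j hij => mul_nonneg ht (hA.1 i j hij), by rw [smul_mulVec, hA.2, smul_zero]⟩

theorem IsGenerator.mexp_mem_rowStochastic [DecidableEq n] {A : Matrix n n ℝ}
    (hA : IsGenerator A) : mexp A ∈ rowStochastic ℝ n :=
  ⟨mexp_nonneg hA.1, mexp_mulVec_of_mulVec_eq_zero hA.2⟩

theorem isReversible_iff [DecidableEq n] {w : n → ℝ} {A : Matrix n n ℝ} :
    IsReversible w A ↔ Aᵀ * diagonal w = diagonal w * A := by
  simp only [IsReversible, ← Matrix.ext_iff, diagonal_mul, mul_diagonal, transpose_apply, eq_comm,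
    mul_comm]

theorem isReversible_mexp [DecidableEq n] {w : n → ℝ} {A : Matrix n n ℝ}
    (hA : IsReversible w A) : IsReversible w (mexp A) := by
  rw [isReversible_iff] at hA ⊢
  rw [← mexp_transpose]
  exact mexp_mul_eq_mul_mexp hA

theorem sum_mul_mulVec_compl_le [DecidableEq n] {P : Matrix n n ℝ} (hP : P ∈ rowStochastic ℝ n)
    {w : n → ℝ} (hw : ∀ i, 0 ≤ w i) (hrev : IsReversible w P) (S : Set n) :
    ∑ i with i ∈ S, w i * (P *ᵥ fun j => if j ∈ S then 0 else 1) i ≤ ∑ j with j ∉ S, w j := by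
  calc ∑ i with i ∈ S, w i * (P *ᵥ fun j => if j ∈ S then 0 else 1) i
      = ∑ i with i ∈ S, ∑ j with j ∉ S, w i * P i j := by
        simp [mulVec, dotProduct, mul_sum, sum_filter, ite_not]
    _ = ∑ j with j ∉ S, w j * ∑ i with i ∈ S, P j i := by
        rw [sum_comm]
        simp only [mul_sum]
        exact sum_congr rfl fun j _ => sum_congr rfl fun i _ => hrev i j
    _ ≤ ∑ j with j ∉ S, w j := by
        refine sum_le_sum fun j _ => mul_le_of_le_one_right (hw j) ?_
        rw [← sum_row_of_mem_rowStochastic hP j]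
        exact sum_le_univ_sum_of_nonneg fun i => hP.1 j i

end MarkovChain

section Defects

variable {ι κ : Type*} [Fintype ι] [Fintype κ]

/-- The number of defects of a family of signs; as for spins, `false` codes the sign `-1`. -/
def numDefects (p : ι → Bool) : ℕ := #{x | p x = false}

theorem numDefects_eq_zero {p : ι → Bool} : numDefects p = 0 ↔ p = ⊤ := by
  simp [numDefects, filter_eq_empty_iff, funext_iff]

theorem pow_numDefects {R : Type*} [CommMonoid R] (q : R) (p : ι → Bool) :
    q ^ numDefects p = ∏ x, if p x = false then q else 1 := by
  rw [numDefects, prod_ite, prod_const, prod_const_one, mul_one]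

theorem numDefects_prod (p : ι × κ → Bool) : numDefects p = ∑ i, numDefects fun j => p (i, j) := by
  simp only [numDefects, card_filter, Fintype.sum_prod_type]

theorem sval_eq (b : Bool) : sval b = if b = false then -1 else 1 := by
  cases b <;> rfl

theorem prod_sval (p : ι → Bool) : ∏ x, sval (p x) = (-1) ^ numDefects p := by
  simp only [pow_numDefects, sval_eq]

theorem sum_sval (p : ι → Bool) : ∑ x, sval (p x) = Fintype.card ι - 2 * numDefects p := by
  have h (b : Bool) : sval b = 1 - 2 * if b = false then 1 else 0 := by
    cases b <;> norm_num [sval]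
  simp only [h, sum_sub_distrib, ← mul_sum, sum_boole, numDefects, sum_const, card_univ,
    nsmul_eq_mul, mul_one]

variable [DecidableEq ι] [DecidableEq κ]

theorem sum_pow_numDefects (q : ℝ) :
    ∑ p : ι → Bool, q ^ numDefects p = (1 + q) ^ Fintype.card ι := by
  simp only [pow_numDefects]
  rw [← Fintype.prod_sum fun (_ : ι) (b : Bool) => if b = false then q else 1]
  simp

theorem sum_even_pow_numDefects (q : ℝ) :
    ∑ p : ι → Bool with Even (numDefects p), q ^ numDefects p =
      ((1 + q) ^ Fintype.card ι + (1 - q) ^ Fintype.card ι) / 2 := by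
  rw [sub_eq_add_neg, ← sum_pow_numDefects, ← sum_pow_numDefects, ← sum_add_distrib, sum_div,
    sum_filter]
  refine sum_congr rfl fun p _ => ?_
  split_ifs with hp
  · rw [hp.neg_pow, add_self_div_two]
  · rw [(Nat.not_even_iff_odd.1 hp).neg_pow, add_neg_cancel, zero_div]

theorem even_part_one_add_pow_le_cosh {q : ℝ} (hq : 0 ≤ q) (n : ℕ) :
    ((1 + q) ^ n + (1 - q) ^ n) / 2 ≤ Real.cosh (n * q) := by
  suffices h : ((1 + q) ^ n + (1 - q) ^ n) / 2 ≤ Real.cosh (n * q) ∧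
      ((1 + q) ^ n - (1 - q) ^ n) / 2 ≤ Real.sinh (n * q) from h.1
  induction n with
  | zero => simp
  | succ n ih =>
    obtain ⟨hcosh, hsinh⟩ := ih
    have hcosh_q : 1 ≤ Real.cosh q := Real.one_le_cosh q
    have hsinh_q : q ≤ Real.sinh q := Real.self_le_sinh_iff.2 hq
    have : 0 ≤ Real.sinh (n * q) := Real.sinh_nonneg_iff.2 (by positivity)
    have : 0 ≤ Real.cosh (n * q) := (Real.cosh_pos _).le
    rw [Nat.cast_succ, add_one_mul, Real.cosh_add, Real.sinh_add]
    constructor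
    · calc ((1 + q) ^ (n + 1) + (1 - q) ^ (n + 1)) / 2
          = ((1 + q) ^ n + (1 - q) ^ n) / 2 * 1 + ((1 + q) ^ n - (1 - q) ^ n) / 2 * q := by ring
        _ ≤ _ := by gcongr
    · calc ((1 + q) ^ (n + 1) - (1 - q) ^ (n + 1)) / 2
          = ((1 + q) ^ n - (1 - q) ^ n) / 2 * 1 + ((1 + q) ^ n + (1 - q) ^ n) / 2 * q := by ring
        _ ≤ _ := by gcongr

theorem sum_even_pow_numDefects_le {q : ℝ} (hq : 0 ≤ q) :
    ∑ p : ι → Bool with Even (numDefects p), q ^ numDefects p ≤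
      Real.exp ((Fintype.card ι * q) ^ 2 / 2) := by
  rw [sum_even_pow_numDefects]
  exact (even_part_one_add_pow_le_cosh hq _).trans (Real.cosh_le_exp_half_sq _)

/-- The families of signs for which each row `{i} × κ` contains an even number of defects. -/
def evenRows (ι κ : Type*) [Fintype ι] [Fintype κ] [DecidableEq ι] [DecidableEq κ] :
    Finset (ι × κ → Bool) :=
  {p | ∀ i, Even (numDefects fun j => p (i, j))}

theorem mem_evenRows {p : ι × κ → Bool} :
    p ∈ evenRows ι κ ↔ ∀ i, Even (numDefects fun j => p (i, j)) :=
  mem_filter_univ p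

theorem sum_evenRows_pow_numDefects (q : ℝ) :
    ∑ p ∈ evenRows ι κ, q ^ numDefects p =
      (∑ r : κ → Bool with Even (numDefects r), q ^ numDefects r) ^ Fintype.card ι := by
  rw [← card_univ, ← prod_const, prod_univ_sum]
  refine sum_equiv (Equiv.curry ι κ Bool) (fun p => ?_) fun p _ => ?_
  · simp only [mem_evenRows, Fintype.mem_piFinset, mem_filter_univ]
    rfl
  · rw [numDefects_prod, prod_pow_eq_pow_sum]
    rfl

end Defects

section Plaquettes

variable {L : ℕ}

theorem sval_bihimp (a b : Bool) : sval (a ⇔ b) = sval a * sval b := by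
  cases a <;> cases b <;> norm_num [sval, bihimp]

theorem sval_mul_self (a : Bool) : sval a * sval a = 1 := by
  cases a <;> norm_num [sval]

/-- The plaquette variables coded as Booleans, so that `false` marks a defect. The product of spins
is the biimplication `⇔` of their codes, with unit `⊤`. -/
def plaqSign (σ : ConfigP L) : Fin L × Fin L → Bool := fun x =>
  σ x ⇔ σ (fsucc x.1, x.2) ⇔ σ (x.1, fsucc x.2) ⇔ σ (fsucc x.1, fsucc x.2)

theorem sval_plaqSign (σ : ConfigP L) (x : Fin L × Fin L) : sval (plaqSign σ x) = plaqP L σ x := by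
  simp only [plaqSign, plaqP, sval_bihimp]

theorem plaqSign_top : plaqSign (⊤ : ConfigP L) = ⊤ := by
  ext x
  simp [plaqSign]

theorem plaqSign_bihimp (g σ : ConfigP L) : plaqSign (g ⇔ σ) = plaqSign g ⇔ plaqSign σ := by
  ext x
  simp only [plaqSign, Pi.bihimp_apply, bihimp_bihimp_bihimp_comm]

theorem hamP_eq (σ : ConfigP L) :
    hamP L σ = -(1 / 2) * Fintype.card (Fin L × Fin L) + numDefects (plaqSign σ) := by
  simp only [hamP, ← sval_plaqSign, sum_sval]
  ring

theorem mem_GroundP_iff {σ : ConfigP L} : σ ∈ GroundP L ↔ plaqSign σ = ⊤ := by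
  simp only [← numDefects_eq_zero, GroundP, Set.mem_ofPred_eq, hamP_eq, add_le_add_iff_left,
    Nat.cast_le]
  refine ⟨fun h => ?_, fun h η => h ▸ Nat.zero_le _⟩
  have htop : numDefects (plaqSign (⊤ : ConfigP L)) = 0 := numDefects_eq_zero.2 plaqSign_top
  exact Nat.le_zero.1 (htop ▸ h ⊤)

theorem plaqSign_bihimp_of_mem_GroundP {g : ConfigP L} (hg : g ∈ GroundP L) (σ : ConfigP L) :
    plaqSign (g ⇔ σ) = plaqSign σ := by
  rw [plaqSign_bihimp, mem_GroundP_iff.1 hg, top_bihimp]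

theorem bihimp_mem_GroundP {g σ : ConfigP L} (h : plaqSign g = plaqSign σ) :
    g ⇔ σ ∈ GroundP L := by
  rw [mem_GroundP_iff, plaqSign_bihimp, h, bihimp_self]

theorem card_plaqSign_fiber_le (p : Fin L × Fin L → Bool) :
    #{σ : ConfigP L | plaqSign σ = p} ≤ #{σ : ConfigP L | σ ∈ GroundP L} := by
  rcases ({σ : ConfigP L | plaqSign σ = p} : Finset _).eq_empty_or_nonempty with h | ⟨τ, hτ⟩
  · simp [h]
  · rw [mem_filter_univ] at hτ
    refine card_le_card_of_injOn (τ ⇔ ·) (fun σ hσ => ?_) (bihimp_right_injective τ).injOn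
    rw [mem_coe, mem_filter_univ] at hσ ⊢
    exact bihimp_mem_GroundP (hτ.trans hσ.symm)

theorem fsucc_bijective : Function.Bijective (fsucc : Fin L → Fin L) := by
  rw [← Finite.injective_iff_bijective]
  intro i j h
  have hmod : i.val ≡ j.val [MOD L] := Nat.ModEq.add_right_cancel' 1 (congrArg Fin.val h)
  exact Fin.ext (hmod.eq_of_lt_of_lt i.isLt j.isLt)

theorem even_numDefects_plaqSign_row (σ : ConfigP L) (i : Fin L) :
    Even (numDefects fun j => plaqSign σ (i, j)) := by
  set f : Fin L → ℝ := fun j => sval (σ (i, j)) * sval (σ (fsucc i, j)) with hf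
  have hplaq (j : Fin L) : sval (plaqSign σ (i, j)) = f j * f (fsucc j) := by
    rw [sval_plaqSign, plaqP]
    ring
  have hsq (j : Fin L) : f j * f j = 1 := by
    rw [hf, mul_mul_mul_comm, sval_mul_self, sval_mul_self, one_mul]
  rw [← neg_one_pow_eq_one_iff_even (R := ℝ) (by norm_num), ← prod_sval]
  calc ∏ j, sval (plaqSign σ (i, j)) = (∏ j, f j) * ∏ j, f (fsucc j) := by
        simp only [hplaq, prod_mul_distrib]
    _ = 1 := by
        rw [fsucc_bijective.prod_comp f, ← prod_mul_distrib, prod_eq_one fun j _ => hsq j]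

theorem sum_pow_numDefects_plaqSign_le {q : ℝ} (hq : 0 ≤ q) :
    ∑ σ : ConfigP L, q ^ numDefects (plaqSign σ) ≤
      #{σ : ConfigP L | σ ∈ GroundP L} * Real.exp (L ^ 3 * q ^ 2 / 2) := by
  set N := #{σ : ConfigP L | σ ∈ GroundP L}
  calc ∑ σ : ConfigP L, q ^ numDefects (plaqSign σ)
      = ∑ p ∈ univ.image (plaqSign (L := L)),
          #{σ : ConfigP L | plaqSign σ = p} • q ^ numDefects p :=
        sum_comp (fun p => q ^ numDefects p) plaqSign
    _ ≤ ∑ p ∈ univ.image (plaqSign (L := L)), N * q ^ numDefects p := by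
        refine sum_le_sum fun p _ => ?_
        rw [nsmul_eq_mul]
        gcongr
        exact card_plaqSign_fiber_le p
    _ ≤ ∑ p ∈ evenRows (Fin L) (Fin L), N * q ^ numDefects p := by
        refine sum_le_sum_of_subset_of_nonneg (fun p hp => ?_) fun p _ _ => by positivity
        obtain ⟨σ, -, rfl⟩ := mem_image.1 hp
        exact mem_evenRows.2 (even_numDefects_plaqSign_row σ)
    _ = N * (∑ r : Fin L → Bool with Even (numDefects r), q ^ numDefects r) ^ L := by
        rw [← mul_sum, sum_evenRows_pow_numDefects, Fintype.card_fin]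
    _ ≤ N * Real.exp ((L * q) ^ 2 / 2) ^ L := by
        gcongr
        simpa using sum_even_pow_numDefects_le (ι := Fin L) hq
    _ = N * Real.exp (L ^ 3 * q ^ 2 / 2) := by
        rw [← Real.exp_nat_mul]
        ring_nf

theorem exp_neg_mul_hamP (β : ℝ) (σ : ConfigP L) :
    Real.exp (-β * hamP L σ) =
      Real.exp (-β * hamP L ⊤) * Real.exp (-β) ^ numDefects (plaqSign σ) := by
  rw [← Real.exp_nat_mul, ← Real.exp_add, hamP_eq, hamP_eq, plaqSign_top,
    numDefects_eq_zero.2 rfl]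
  push_cast
  ring_nf

theorem sum_exp_neg_mul_hamP_excited_le (L : ℕ) (β : ℝ) :
    ∑ σ : ConfigP L with σ ∉ GroundP L, Real.exp (-β * hamP L σ) ≤
      (∑ σ : ConfigP L with σ ∈ GroundP L, Real.exp (-β * hamP L σ)) *
        (Real.exp (L ^ 3 * Real.exp (-β) ^ 2 / 2) - 1) := by
  have hground : ∑ σ : ConfigP L with σ ∈ GroundP L, Real.exp (-β) ^ numDefects (plaqSign σ) =
      #{σ : ConfigP L | σ ∈ GroundP L} := by
    rw [card_eq_sum_ones, Nat.cast_sum]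
    refine sum_congr rfl fun σ hσ => ?_
    rw [numDefects_eq_zero.2 (mem_GroundP_iff.1 (mem_filter.1 hσ).2), pow_zero, Nat.cast_one]
  have htotal := sum_pow_numDefects_plaqSign_le (L := L) (Real.exp_pos (-β)).le
  rw [← sum_filter_add_sum_filter_not _ (· ∈ GroundP L), hground] at htotal
  have hweight (s : Finset (ConfigP L)) : ∑ σ ∈ s, Real.exp (-β * hamP L σ) =
      Real.exp (-β * hamP L ⊤) * ∑ σ ∈ s, Real.exp (-β) ^ numDefects (plaqSign σ) := by
    rw [mul_sum]
    exact sum_congr rfl fun σ _ => exp_neg_mul_hamP β σ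
  rw [hweight, hweight, hground, mul_assoc]
  gcongr
  linarith

end Plaquettes

section Dynamics

variable {L : ℕ}

theorem flipP_ne (σ : ConfigP L) (x : Fin L × Fin L) : flipP L σ x ≠ σ := fun h => by
  simpa [flipP] using congrFun h x

theorem flipP_flipP (σ : ConfigP L) (x : Fin L × Fin L) : flipP L (flipP L σ x) x = σ := by
  ext i
  by_cases h : i = x <;> simp [flipP, h]

theorem eq_flipP_comm {σ η : ConfigP L} {x : Fin L × Fin L} :
    η = flipP L σ x ↔ σ = flipP L η x := by
  constructor <;> (rintro rfl; rw [flipP_flipP])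

theorem flipP_bihimp (g σ : ConfigP L) (x : Fin L × Fin L) :
    flipP L (g ⇔ σ) x = g ⇔ flipP L σ x := by
  ext i
  simp only [flipP, Pi.bihimp_apply]
  split_ifs
  · cases g i <;> cases σ i <;> rfl
  · rfl

theorem hamP_bihimp {g : ConfigP L} (hg : g ∈ GroundP L) (σ : ConfigP L) :
    hamP L (g ⇔ σ) = hamP L σ := by
  rw [hamP_eq, hamP_eq, plaqSign_bihimp_of_mem_GroundP hg]

theorem metroRateP_nonneg (β : ℝ) (σ η : ConfigP L) : 0 ≤ metroRateP L β σ η :=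
  le_min zero_le_one (Real.exp_pos _).le

theorem isReversible_metroRateP (β : ℝ) :
    IsReversible (fun σ => Real.exp (-β * hamP L σ)) (metroRateP L β) := by
  have hmin (σ η : ConfigP L) : Real.exp (-β * hamP L σ) * metroRateP L β σ η =
      min (Real.exp (-β * hamP L σ)) (Real.exp (-β * hamP L η)) := by
    rw [metroRateP, mul_min_of_nonneg _ _ (Real.exp_pos _).le, mul_one, ← Real.exp_add]
    ring_nf
  intro σ η
  rw [hmin, hmin, min_comm]

theorem genP_apply (β : ℝ) (σ η : ConfigP L) :
    genP L β σ η = ∑ x, metroRateP L β σ (flipP L σ x) *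
      ((if η = flipP L σ x then 1 else 0) - if η = σ then 1 else 0) := by
  rcases eq_or_ne η σ with rfl | h
  · simp [genP, (flipP_ne _ _).symm]
  · simp [genP, h]

theorem isGenerator_genP (L : ℕ) (β : ℝ) : IsGenerator (genP L β) := by
  refine ⟨fun σ η h => ?_, funext fun σ => ?_⟩
  · rw [genP, if_neg h.symm]
    exact sum_nonneg fun x _ => ite_nonneg (metroRateP_nonneg β _ _) le_rfl
  · simp only [mulVec, dotProduct, Pi.one_apply, mul_one, genP_apply]
    rw [sum_comm]
    simp [← mul_sum]

theorem isReversible_genP (L : ℕ) (β : ℝ) :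
    IsReversible (fun σ => Real.exp (-β * hamP L σ)) (genP L β) := by
  intro σ η
  rcases eq_or_ne σ η with rfl | h
  · rfl
  simp only [genP, h, h.symm, if_false, mul_sum]
  refine sum_congr rfl fun x _ => ?_
  by_cases hx : η = flipP L σ x
  · rw [if_pos hx, if_pos (eq_flipP_comm.1 hx), ← hx, ← eq_flipP_comm.1 hx]
    exact isReversible_metroRateP β σ η
  · rw [if_neg hx, if_neg (mt eq_flipP_comm.2 hx), mul_zero, mul_zero]

theorem genP_bihimp {g : ConfigP L} (hg : g ∈ GroundP L) (β : ℝ) (σ η : ConfigP L) :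
    genP L β (g ⇔ σ) (g ⇔ η) = genP L β σ η := by
  simp only [genP, flipP_bihimp, metroRateP, hamP_bihimp hg, bihimp_right_inj]

theorem mexp_genP_mulVec_bihimp {g : ConfigP L} (hg : g ∈ GroundP L) (β t : ℝ) (σ : ConfigP L) :
    (mexp (t • genP L β) *ᵥ fun η => if η ∈ GroundP L then 0 else 1) (g ⇔ σ) =
      (mexp (t • genP L β) *ᵥ fun η => if η ∈ GroundP L then 0 else 1) σ := by
  refine congrFun (mexp_mulVec_comp_equiv (bihimp_right_involutive g).toPerm ?_ ?_) σ
  · ext σ η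
    simp [genP_bihimp hg]
  · ext σ
    simp [mem_GroundP_iff, plaqSign_bihimp_of_mem_GroundP hg]

theorem mexp_genP_mulVec_eq_of_mem_GroundP (β t : ℝ) {σ τ : ConfigP L} (hσ : σ ∈ GroundP L)
    (hτ : τ ∈ GroundP L) :
    (mexp (t • genP L β) *ᵥ fun η => if η ∈ GroundP L then 0 else 1) τ =
      (mexp (t • genP L β) *ᵥ fun η => if η ∈ GroundP L then 0 else 1) σ := by
  have hmul : τ ⇔ σ ∈ GroundP L :=
    bihimp_mem_GroundP ((mem_GroundP_iff.1 hτ).trans (mem_GroundP_iff.1 hσ).symm)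
  rw [← mexp_genP_mulVec_bihimp hmul β t σ, bihimp_bihimp_cancel_right]

theorem mexp_genP_mulVec_excited_le (L : ℕ) (β : ℝ) {t : ℝ} (ht : 0 ≤ t) {σ : ConfigP L}
    (hσ : σ ∈ GroundP L) :
    (mexp (t • genP L β) *ᵥ fun η => if η ∈ GroundP L then 0 else 1) σ ≤
      Real.exp (L ^ 3 * Real.exp (-β) ^ 2 / 2) - 1 := by
  set P := mexp (t • genP L β)
  set w : ConfigP L → ℝ := fun σ => Real.exp (-β * hamP L σ)
  have hP : P ∈ rowStochastic ℝ (ConfigP L) :=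
    ((isGenerator_genP L β).smul ht).mexp_mem_rowStochastic
  have hrev : IsReversible w P := isReversible_mexp ((isReversible_genP L β).smul t)
  have hw_pos : 0 < ∑ g with g ∈ GroundP L, w g :=
    sum_pos (fun g _ => Real.exp_pos _) ⟨σ, mem_filter.2 ⟨mem_univ σ, hσ⟩⟩
  refine le_of_mul_le_mul_left ?_ hw_pos
  calc (∑ g with g ∈ GroundP L, w g) * (P *ᵥ fun η => if η ∈ GroundP L then 0 else 1) σ
      = ∑ g with g ∈ GroundP L, w g * (P *ᵥ fun η => if η ∈ GroundP L then 0 else 1) g := by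
        rw [sum_mul]
        refine sum_congr rfl fun g hg => ?_
        rw [mexp_genP_mulVec_eq_of_mem_GroundP β t hσ (mem_filter.1 hg).2]
    _ ≤ ∑ η with η ∉ GroundP L, w η :=
        sum_mul_mulVec_compl_le hP (fun η => (Real.exp_pos _).le) hrev _
    _ ≤ _ := sum_exp_neg_mul_hamP_excited_le L β

end Dynamics

section CriticalLength

theorem one_le_Lc {β : ℝ} (hβ : 0 ≤ β) : 1 ≤ Lc β :=
  Nat.le_floor (by simpa using Real.one_le_exp (by positivity : 0 ≤ β / 2))

theorem Lc_pow_four_mul_le_one (β : ℝ) : (Lc β : ℝ) ^ 4 * Real.exp (-β) ^ 2 ≤ 1 := by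
  calc (Lc β : ℝ) ^ 4 * Real.exp (-β) ^ 2
      ≤ Real.exp (β / 2) ^ 4 * Real.exp (-β) ^ 2 := by
        gcongr
        exact Nat.floor_le (Real.exp_pos _).le
    _ = 1 := by
        rw [← Real.exp_nat_mul, ← Real.exp_nat_mul, ← Real.exp_add, Real.exp_eq_one_iff]
        push_cast
        ring

theorem exp_half_sub_one_le {x : ℝ} (hx : 0 ≤ x) (hx' : x ≤ 1) : Real.exp (x / 2) - 1 ≤ x := by
  have h := Real.abs_exp_sub_one_le (x := x / 2) (by rw [abs_of_nonneg] <;> linarith)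
  rw [abs_of_nonneg (by positivity : 0 ≤ x / 2), mul_div_cancel₀ x two_ne_zero] at h
  exact (le_abs_self _).trans h

end CriticalLength

theorem stay_in_ground_states_general {β t : ℝ} (hβ : 0 ≤ β) (ht : 0 ≤ t) {σ : ConfigP (Lc β)}
    (hσ : σ ∈ GroundP (Lc β)) :
    (mexp (t • genP (Lc β) β) *ᵥ fun η => if η ∈ GroundP (Lc β) then 0 else 1) σ ≤
      1 / (Lc β : ℝ) := by
  have hL : (1 : ℝ) ≤ Lc β := Nat.one_le_cast.2 (one_le_Lc hβ)
  have hratio : (Lc β : ℝ) ^ 3 * Real.exp (-β) ^ 2 ≤ 1 / Lc β := by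
    rw [le_div_iff₀ (by positivity)]
    linarith [Lc_pow_four_mul_le_one β]
  have hratio_le_one : (Lc β : ℝ) ^ 3 * Real.exp (-β) ^ 2 ≤ 1 :=
    hratio.trans (div_le_one_of_le₀ hL (by positivity))
  calc (mexp (t • genP (Lc β) β) *ᵥ fun η => if η ∈ GroundP (Lc β) then 0 else 1) σ
      ≤ Real.exp ((Lc β : ℝ) ^ 3 * Real.exp (-β) ^ 2 / 2) - 1 :=
        mexp_genP_mulVec_excited_le (Lc β) β ht hσ
    _ ≤ (Lc β : ℝ) ^ 3 * Real.exp (-β) ^ 2 := exp_half_sub_one_le (by positivity) hratio_le_one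
    _ ≤ 1 / Lc β := hratio

end SPMP

/-- Lemma `LemmaDefinitelyInGS`, staying in the ground states: at the
critical length, for every `t ∈ [e^{3.5β}, β²e^{4β}]` and every ground state `σ`,
`ℙ_σ[X_t ∉ 𝒢] = (e^{t𝓛}𝟙_{𝒢ᶜ})(σ) ≤ C L^{-1/2}`. -/
theorem stay_in_ground_states :
    ∃ C β₀ : ℝ, 0 < C ∧ ∀ β : ℝ, β₀ ≤ β →
      ∀ t : ℝ, Real.exp (3.5 * β) ≤ t → t ≤ β ^ 2 * Real.exp (4 * β) →
      ∀ σ ∈ GroundP (Lc β),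
        ((mexp (t • genP (Lc β) β)).mulVec
            (fun η => if η ∈ GroundP (Lc β) then (0 : ℝ) else 1)) σ ≤
          C / Real.sqrt (Lc β : ℝ) := by
  refine ⟨1, 0, one_pos, fun β hβ t ht _ σ hσ => ?_⟩
  have hL : (1 : ℝ) ≤ Lc β := Nat.one_le_cast.2 (one_le_Lc hβ)
  refine (stay_in_ground_states_general hβ ((Real.exp_pos _).le.trans ht) hσ).trans ?_
  exact one_div_le_one_div_of_le (by positivity) (Real.sqrt_le_self_iff.2 (Or.inr hL))

end
end
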